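/- arXiv:math/0509446 — 5 statements merged into one kernel-verified Lean document; each statement's English description precedes it below -/
import Mathlib

section
/- Suppose b > 0, β > 0, T > 0, a ≥ 0 is a constant, and u : [0,T) → [0,∞) is locally integrable and satisfies u(t) ≤ a + b ∫₀ᵗ (t−s)^{β−1} u(s) ds for all t ∈ [0,T). Then, with θ = (b Γ(β))^{1/β}, for all t ∈ [0,T) one has u(t) ≤ a · E_β(θt). -/
open Real MeasureTheory

noncomputable section

/-- The Mittag-Leffler-type function `E_β(z) = Σ_{n≥0} z^{nβ}/Γ(nβ+1)`. -/
def mittagLeffler (β z : ℝ) : ℝ := ∑' n : ℕ, z ^ ((n : ℝ) * β) / Real.Gamma ((n : ℝ) * β + 1)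

/-!
Write `k_p = x₊ ^ (p - 1) / Γ(p)`. The Beta integral says `k_p ⋆ k_q = k_{p+q}`, so an inequality
`V ≤ A + c (k_β ⋆ V)` can be iterated to
`V ≤ A + ∑_{1 ≤ k ≤ n} c ^ k (k_{kβ} ⋆ A) + c ^ (n + 1) (k_{(n+1)β} ⋆ V)`. Once `nβ ≥ 1` the kernel
`k_{nβ}` is monotone, so the remainder at `x` is at most `c ^ n k_{nβ}(x) ∫ V`, which tends to `0`
because `Γ` outgrows every exponential. For `A = a k_1` the resulting series is `a E_β`.
Convolving in `ℝ≥0∞`, with `V` the positive part of `u` cut off to `(0, t]`, makes every integral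
meaningful.
-/

open Filter Topology ProbabilityTheory
open scoped ENNReal

section MittagLeffler

lemma mittagLeffler_nonneg {β z : ℝ} (hβ : 0 ≤ β) (hz : 0 ≤ z) : 0 ≤ mittagLeffler β z :=
  tsum_nonneg fun _ ↦ by positivity

lemma mittagLeffler_zero {β : ℝ} (hβ : β ≠ 0) : mittagLeffler β 0 = 1 := by
  rw [mittagLeffler, tsum_eq_single 0 fun n hn ↦ ?_]
  · simp
  · rw [zero_rpow (mul_ne_zero (Nat.cast_ne_zero.2 hn) hβ), zero_div]

lemma rpow_sub_one_mul_exp_neg_le_Gamma {M y : ℝ} (hM : 0 ≤ M) (hy : 1 ≤ y) :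
    M ^ (y - 1) * exp (-M) ≤ Gamma y := by
  have hΓ_int := GammaIntegral_convergent (zero_lt_one.trans_le hy)
  have hsub : Set.Ioi M ⊆ Set.Ioi 0 := Set.Ioi_subset_Ioi hM
  calc M ^ (y - 1) * exp (-M) = ∫ x in Set.Ioi M, exp (-x) * M ^ (y - 1) := by
        rw [integral_mul_const, integral_exp_neg_Ioi, mul_comm]
    _ ≤ ∫ x in Set.Ioi M, exp (-x) * x ^ (y - 1) :=
        setIntegral_mono_on ((integrableOn_exp_neg_Ioi M).mul_const _) (hΓ_int.mono_set hsub)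
          measurableSet_Ioi fun x (hx : M < x) ↦ by gcongr
    _ ≤ ∫ x in Set.Ioi 0, exp (-x) * x ^ (y - 1) :=
        setIntegral_mono_set hΓ_int
          (ae_restrict_of_forall_mem measurableSet_Ioi fun x (hx : 0 < x) ↦ by positivity)
          hsub.eventuallyLE
    _ = Gamma y := (Gamma_eq_integral (zero_lt_one.trans_le hy)).symm

lemma eventually_one_le_natCast_mul_add {β : ℝ} (hβ : 0 < β) (q : ℝ) :
    ∀ᶠ n : ℕ in atTop, 1 ≤ n * β + q :=
  (tendsto_atTop_add_const_right _ q
    (tendsto_natCast_atTop_atTop.atTop_mul_const hβ)).eventually_ge_atTop 1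

lemma summable_rpow_div_Gamma {β z : ℝ} (hβ : 0 < β) (q : ℝ) (hz : 0 ≤ z) :
    Summable fun n : ℕ ↦ z ^ (n * β) / Gamma (n * β + q) := by
  have hM : 0 < z + 1 := by positivity
  have hratio : (z / (z + 1)) ^ β < 1 :=
    rpow_lt_one (by positivity) ((div_lt_one hM).2 (lt_add_one z)) hβ
  have hgeom := (summable_geometric_of_lt_one (by positivity) hratio).mul_left
    (exp (z + 1) / (z + 1) ^ (q - 1))
  refine hgeom.of_norm_bounded_eventually_nat ?_
  filter_upwards [eventually_one_le_natCast_mul_add hβ q] with n hn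
  rw [norm_of_nonneg (by positivity)]
  calc z ^ (n * β) / Gamma (n * β + q)
      ≤ z ^ (n * β) / ((z + 1) ^ (n * β + q - 1) * exp (-(z + 1))) := by
        gcongr
        exact rpow_sub_one_mul_exp_neg_le_Gamma hM.le hn
    _ = exp (z + 1) / (z + 1) ^ (q - 1) * ((z / (z + 1)) ^ β) ^ n := by
        rw [← rpow_mul_natCast (by positivity), mul_comm β, div_rpow hz hM.le, add_sub_assoc,
          rpow_add hM, exp_neg]
        field_simp

end MittagLeffler

section FracKernel

/-- The Riemann–Liouville kernel `x₊ ^ (p - 1) / Γ(p)`, convolution with which is fractional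
integration of order `p`. It takes values in `ℝ≥0∞`, so that convolutions with it always exist,
and is extended by zero to `x ≤ 0`. -/
def fracKernel (p : ℝ) : ℝ → ℝ≥0∞ :=
  (Set.Ioi 0).indicator fun x ↦ ENNReal.ofReal (x ^ (p - 1) / Gamma p)

lemma fracKernel_of_pos (p : ℝ) {x : ℝ} (hx : 0 < x) :
    fracKernel p x = ENNReal.ofReal (x ^ (p - 1) / Gamma p) :=
  Set.indicator_of_mem hx _

lemma fracKernel_of_nonpos (p : ℝ) {x : ℝ} (hx : x ≤ 0) : fracKernel p x = 0 :=
  Set.indicator_of_notMem hx.not_gt _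

lemma fracKernel_ne_top (p x : ℝ) : fracKernel p x ≠ ∞ := by
  rw [fracKernel, Set.indicator_apply]
  split_ifs <;> simp

lemma fracKernel_one_of_pos {x : ℝ} (hx : 0 < x) : fracKernel 1 x = 1 := by
  simp [fracKernel_of_pos 1 hx]

@[fun_prop]
lemma measurable_fracKernel (p : ℝ) : Measurable (fracKernel p) :=
  Measurable.indicator (by fun_prop) measurableSet_Ioi

lemma monotone_fracKernel {p : ℝ} (hp : 1 ≤ p) : Monotone (fracKernel p) := by
  intro x y hxy
  rcases le_or_gt x 0 with hx | hx
  · simp [fracKernel_of_nonpos p hx]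
  · rw [fracKernel_of_pos p hx, fracKernel_of_pos p (hx.trans_le hxy)]
    gcongr

lemma lintegral_inv_mul_betaPDF {p q x : ℝ} (hp : 0 < p) (hq : 0 < q) (hx : 0 < x) :
    ∫⁻ y, ENNReal.ofReal x⁻¹ * betaPDF p q (x⁻¹ * y) = 1 := by
  have hβ : Measurable (betaPDF p q) := (measurable_betaPDFReal p q).ennreal_ofReal
  rw [lintegral_const_mul _ (by fun_prop), ← lintegral_map hβ (measurable_const_mul x⁻¹),
    Real.map_volume_mul_left (inv_ne_zero hx.ne'), lintegral_smul_measure,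
    lintegral_betaPDF_eq_one hp hq, inv_inv, abs_of_pos hx, smul_eq_mul, mul_one,
    ← ENNReal.ofReal_mul (inv_nonneg.2 hx.le), inv_mul_cancel₀ hx.ne', ENNReal.ofReal_one]

lemma fracKernel_mul_fracKernel_sub {p q x : ℝ} (hp : 0 < p) (hq : 0 < q) (hx : 0 < x) (y : ℝ) :
    fracKernel p y * fracKernel q (x - y) =
      fracKernel (p + q) x * (ENNReal.ofReal x⁻¹ * betaPDF p q (x⁻¹ * y)) := by
  obtain ⟨z, rfl⟩ : ∃ z, y = x * z := ⟨x⁻¹ * y, (mul_inv_cancel_left₀ hx.ne' y).symm⟩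
  rw [inv_mul_cancel_left₀ hx.ne', ← mul_one_sub]
  rcases le_or_gt z 0 with hz0 | hz0
  · simp [fracKernel_of_nonpos p (mul_nonpos_of_nonneg_of_nonpos hx.le hz0),
      betaPDF_eq_zero_of_nonpos hz0]
  rcases le_or_gt 1 z with hz1 | hz1
  · simp [fracKernel_of_nonpos q (mul_nonpos_of_nonneg_of_nonpos hx.le (sub_nonpos.2 hz1)),
      betaPDF_eq_zero_of_one_le hz1]
  have hz1' : 0 < 1 - z := sub_pos.2 hz1
  have hpow : x ^ (p + q - 1) * x⁻¹ = x ^ (p - 1) * x ^ (q - 1) := by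
    rw [← rpow_neg_one x, ← rpow_add hx, ← rpow_add hx]
    ring_nf
  rw [fracKernel_of_pos p (mul_pos hx hz0), fracKernel_of_pos q (mul_pos hx hz1'),
    fracKernel_of_pos (p + q) hx, betaPDF_of_pos_lt_one hz0 hz1,
    ← ENNReal.ofReal_mul (by positivity), ← ENNReal.ofReal_mul (by positivity),
    ← ENNReal.ofReal_mul (by positivity), mul_rpow hx.le hz0.le, mul_rpow hx.le hz1'.le, beta]
  congr 1
  field_simp at hpow ⊢
  exact hpow.symm

theorem fracKernel_lconvolution_fracKernel {p q : ℝ} (hp : 0 < p) (hq : 0 < q) :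
    fracKernel p ⋆ₗ fracKernel q = fracKernel (p + q) := by
  ext x
  simp only [lconvolution_def, neg_add_eq_sub]
  rcases le_or_gt x 0 with hx | hx
  · rw [fracKernel_of_nonpos _ hx]
    refine lintegral_eq_zero_of_ae_eq_zero (.of_forall fun y ↦ mul_eq_zero.2 ?_)
    rcases le_or_gt y 0 with hy | hy
    · exact .inl (fracKernel_of_nonpos p hy)
    · exact .inr (fracKernel_of_nonpos q (by linarith))
  · simp only [fracKernel_mul_fracKernel_sub hp hq hx]
    rw [lintegral_const_mul' _ _ (fracKernel_ne_top _ _),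
      lintegral_inv_mul_betaPDF hp hq hx, mul_one]

lemma ofReal_pow_mul_fracKernel {β c x : ℝ} (hβ : β ≠ 0) (q : ℝ) (hc : 0 ≤ c) (hx : 0 < x)
    (n : ℕ) : ENNReal.ofReal c ^ n * fracKernel (n * β + q) x =
      ENNReal.ofReal (x ^ (q - 1) * ((c ^ (1 / β) * x) ^ (n * β) / Gamma (n * β + q))) := by
  have hpow : (c ^ (1 / β)) ^ (n * β) = c ^ n := by
    rw [← rpow_mul hc, one_div_mul_eq_div, mul_div_cancel_right₀ _ hβ, rpow_natCast]
  rw [fracKernel_of_pos _ hx, mul_rpow (by positivity) hx.le, hpow, add_sub_assoc, rpow_add hx,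
    ← ENNReal.ofReal_pow hc, ← ENNReal.ofReal_mul (by positivity)]
  ring_nf

lemma tsum_pow_mul_fracKernel_ne_top {β : ℝ} {c : ℝ≥0∞} (hβ : 0 < β) (q : ℝ) (hc : c ≠ ∞)
    (x : ℝ) : ∑' n : ℕ, c ^ n * fracKernel (n * β + q) x ≠ ∞ := by
  rcases le_or_gt x 0 with hx | hx
  · simp [fracKernel_of_nonpos _ hx]
  · rw [← ENNReal.ofReal_toReal hc]
    simp only [ofReal_pow_mul_fracKernel hβ.ne' q ENNReal.toReal_nonneg hx]
    exact ((summable_rpow_div_Gamma hβ q (by positivity)).mul_left _).tsum_ofReal_ne_top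

lemma tsum_ofReal_pow_mul_fracKernel_one {β c x : ℝ} (hβ : 0 < β) (hc : 0 ≤ c) (hx : 0 < x) :
    ∑' n : ℕ, ENNReal.ofReal c ^ n * fracKernel (n * β + 1) x =
      ENNReal.ofReal (mittagLeffler β (c ^ (1 / β) * x)) := by
  rw [mittagLeffler, ENNReal.ofReal_tsum_of_nonneg (fun _ ↦ by positivity)
    (summable_rpow_div_Gamma hβ 1 (by positivity))]
  simp only [ofReal_pow_mul_fracKernel hβ.ne' 1 hc hx, sub_self, rpow_zero, one_mul]

end FracKernel

section LConvolution

variable {G : Type*} [MeasurableSpace G] {μ : Measure G}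

lemma lconvolution_mono_right [Add G] [Neg G] (f : G → ℝ≥0∞) {g h : G → ℝ≥0∞} (hgh : g ≤ h) :
    f ⋆ₗ[μ] g ≤ f ⋆ₗ[μ] h :=
  fun _ ↦ lintegral_mono fun _ ↦ mul_le_mul_right (hgh _) _

lemma lconvolution_const_smul_right [Add G] [Neg G] (f g : G → ℝ≥0∞) {c : ℝ≥0∞}
    (hc : c ≠ ∞) : f ⋆ₗ[μ] (c • g) = c • (f ⋆ₗ[μ] g) := by
  ext x
  simp only [lconvolution_def, Pi.smul_apply, smul_eq_mul, mul_left_comm _ c]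
  exact lintegral_const_mul' _ _ hc

lemma lconvolution_add_right [AddGroup G] [MeasurableAdd₂ G] [MeasurableNeg G] [SFinite μ]
    [μ.IsAddLeftInvariant] {f h : G → ℝ≥0∞} (hf : AEMeasurable f μ) (g : G → ℝ≥0∞)
    (hh : AEMeasurable h μ) : f ⋆ₗ[μ] (g + h) = f ⋆ₗ[μ] g + f ⋆ₗ[μ] h := by
  ext x
  simp only [lconvolution_def, Pi.add_apply, mul_add]
  exact lintegral_add_right' _ (by fun_prop)

end LConvolution

lemma ofReal_integral_le_lintegral_ofReal {α : Type*} [MeasurableSpace α] {μ : Measure α}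
    (f : α → ℝ) : ENNReal.ofReal (∫ x, f x ∂μ) ≤ ∫⁻ x, ENNReal.ofReal (f x) ∂μ := by
  by_cases hf : Integrable f μ
  · rw [integral_eq_lintegral_pos_part_sub_lintegral_neg_part hf]
    exact (ENNReal.ofReal_le_ofReal (sub_le_self _ ENNReal.toReal_nonneg)).trans
      ENNReal.ofReal_toReal_le
  · simp [integral_undef hf]

section Gronwall

variable {β : ℝ} {c : ℝ≥0∞} {A V : ℝ → ℝ≥0∞}

lemma le_add_sum_fracKernel_lconvolution (hβ : 0 < β) (hc : c ≠ ∞) (hV : AEMeasurable V)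
    (hAV : V ≤ A + c • (fracKernel β ⋆ₗ V)) (n : ℕ) :
    V ≤ A + ∑ k ∈ Finset.range n, c ^ (k + 1) • (fracKernel ((k + 1) * β) ⋆ₗ A) +
      c ^ (n + 1) • (fracKernel ((n + 1) * β) ⋆ₗ V) := by
  induction n with
  | zero => simpa using hAV
  | succ n ih =>
    have hn : 0 < (n + 1) * β := by positivity
    have hstep : fracKernel ((n + 1) * β) ⋆ₗ V ≤ fracKernel ((n + 1) * β) ⋆ₗ A +
        c • (fracKernel ((n + 1 + 1) * β) ⋆ₗ V) := by
      refine (lconvolution_mono_right _ hAV).trans_eq ?_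
      rw [lconvolution_add_right (by fun_prop) A (by fun_prop),
        lconvolution_const_smul_right _ _ hc, lconvolution_assoc₀ (by fun_prop) (by fun_prop) hV,
        fracKernel_lconvolution_fracKernel hn hβ, add_one_mul (n + 1 : ℝ)]
    refine ih.trans ((add_le_add_right (smul_le_smul_of_nonneg_left hstep zero_le) _).trans_eq ?_)
    rw [Finset.sum_range_succ, smul_add, smul_smul, ← pow_succ]
    push_cast
    simp only [add_assoc]

lemma fracKernel_lconvolution_le {p : ℝ} (hp : 1 ≤ p) (hV₀ : ∀ x < 0, V x = 0) (x : ℝ) :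
    (fracKernel p ⋆ₗ V) x ≤ fracKernel p x * ∫⁻ y, V y := by
  rw [lconvolution_comm, lconvolution_def, ← lintegral_const_mul' _ _ (fracKernel_ne_top p x)]
  refine lintegral_mono fun y ↦ ?_
  rcases lt_or_ge y 0 with hy | hy
  · simp [hV₀ y hy]
  · rw [mul_comm]
    exact mul_le_mul_left (monotone_fracKernel hp (by linarith)) _

lemma tendsto_pow_mul_fracKernel_lconvolution (hβ : 0 < β) (hc : c ≠ ∞) (hV₀ : ∀ x < 0, V x = 0)
    (hV : ∫⁻ y, V y ≠ ∞) (x : ℝ) :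
    Tendsto (fun n : ℕ ↦ c ^ (n + 1) * (fracKernel ((n + 1) * β) ⋆ₗ V) x) atTop (𝓝 0) := by
  have hker : Tendsto (fun n : ℕ ↦ c ^ n * fracKernel (n * β + β) x) atTop (𝓝 0) :=
    ENNReal.tendsto_atTop_zero_of_tsum_ne_top (tsum_pow_mul_fracKernel_ne_top hβ β hc x)
  have hbound := ENNReal.Tendsto.const_mul (a := c * ∫⁻ y, V y) hker
    (.inr (ENNReal.mul_ne_top hc hV))
  rw [mul_zero] at hbound
  refine tendsto_of_tendsto_of_tendsto_of_le_of_le' tendsto_const_nhds hbound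
    (.of_forall fun _ ↦ zero_le) ?_
  filter_upwards [eventually_one_le_natCast_mul_add hβ β] with n hn
  rw [add_one_mul (n : ℝ)]
  calc c ^ (n + 1) * (fracKernel (n * β + β) ⋆ₗ V) x
      ≤ c ^ (n + 1) * (fracKernel (n * β + β) x * ∫⁻ y, V y) := by
        gcongr
        exact fracKernel_lconvolution_le hn hV₀ x
    _ = c * (∫⁻ y, V y) * (c ^ n * fracKernel (n * β + β) x) := by ring

theorem le_add_tsum_fracKernel_lconvolution (hβ : 0 < β) (hc : c ≠ ∞)
    (hVm : AEMeasurable V) (hV₀ : ∀ x < 0, V x = 0) (hV : ∫⁻ y, V y ≠ ∞)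
    (hAV : V ≤ A + c • (fracKernel β ⋆ₗ V)) (x : ℝ) :
    V x ≤ A x + ∑' n : ℕ, c ^ (n + 1) * (fracKernel ((n + 1) * β) ⋆ₗ A) x := by
  have hlim := (tendsto_pow_mul_fracKernel_lconvolution hβ hc hV₀ hV x).const_add
    (A x + ∑' n : ℕ, c ^ (n + 1) * (fracKernel ((n + 1) * β) ⋆ₗ A) x)
  rw [add_zero] at hlim
  refine ge_of_tendsto' hlim fun n ↦ ?_
  have hiter := le_add_sum_fracKernel_lconvolution hβ hc hVm hAV n x
  simp only [Pi.add_apply, Finset.sum_apply, Pi.smul_apply, smul_eq_mul] at hiter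
  refine hiter.trans ?_
  gcongr
  exact ENNReal.sum_le_tsum _

theorem le_mul_tsum_fracKernel {q : ℝ} {a : ℝ≥0∞} (hβ : 0 < β) (hq : 0 < q) (hc : c ≠ ∞)
    (ha : a ≠ ∞) (hVm : AEMeasurable V) (hV₀ : ∀ x < 0, V x = 0) (hV : ∫⁻ y, V y ≠ ∞)
    (haV : V ≤ a • fracKernel q + c • (fracKernel β ⋆ₗ V)) (x : ℝ) :
    V x ≤ a * ∑' n : ℕ, c ^ n * fracKernel (n * β + q) x := by
  refine (le_add_tsum_fracKernel_lconvolution hβ hc hVm hV₀ hV haV x).trans_eq ?_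
  rw [tsum_eq_zero_add' (f := fun n : ℕ ↦ c ^ n * fracKernel (n * β + q) x) ENNReal.summable,
    mul_add, ← ENNReal.tsum_mul_left]
  congr 1
  · simp
  · refine tsum_congr fun n ↦ ?_
    rw [lconvolution_const_smul_right _ _ ha,
      fracKernel_lconvolution_fracKernel (by positivity) hq, Pi.smul_apply, smul_eq_mul,
      mul_left_comm, Nat.cast_add_one]

lemma ofReal_integral_rpow_mul_le {u : ℝ → ℝ} {x : ℝ} (hβ : 0 < β) (hx : 0 ≤ x)
    (huV : ∀ s ∈ Set.Ioo 0 x, ENNReal.ofReal (u s) ≤ V s) :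
    ENNReal.ofReal (∫ s in (0 : ℝ)..x, (x - s) ^ (β - 1) * u s) ≤
      ENNReal.ofReal (Gamma β) * (fracKernel β ⋆ₗ V) x := by
  rw [intervalIntegral.integral_of_le hx, integral_Ioc_eq_integral_Ioo, lconvolution_comm,
    lconvolution_def, ← lintegral_const_mul' _ _ ENNReal.ofReal_ne_top]
  refine (ofReal_integral_le_lintegral_ofReal _).trans
    ((setLIntegral_mono' measurableSet_Ioo fun s hs ↦ ?_).trans (setLIntegral_le_lintegral _ _))
  have hxs : 0 < x - s := sub_pos.2 hs.2
  have hΓ : 0 < Gamma β := Gamma_pos_of_pos hβ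
  calc ENNReal.ofReal ((x - s) ^ (β - 1) * u s)
      = ENNReal.ofReal (Gamma β) * (ENNReal.ofReal (u s) * fracKernel β (-s + x)) := by
        rw [neg_add_eq_sub, fracKernel_of_pos β hxs, mul_left_comm,
          ← ENNReal.ofReal_mul hΓ.le, mul_div_cancel₀ _ hΓ.ne', mul_comm,
          ENNReal.ofReal_mul' (by positivity)]
    _ ≤ ENNReal.ofReal (Gamma β) * (V s * fracKernel β (-s + x)) := by
        gcongr
        exact huV s hs

lemma indicator_ofReal_le_add_fracKernel_lconvolution {a b t : ℝ} {u : ℝ → ℝ} (hb : 0 ≤ b)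
    (hβ : 0 < β)
    (hyp : ∀ x ∈ Set.Ioc 0 t, u x ≤ a + b * ∫ s in (0 : ℝ)..x, (x - s) ^ (β - 1) * u s) :
    (Set.Ioc 0 t).indicator (fun s ↦ ENNReal.ofReal (u s)) ≤
      ENNReal.ofReal a • fracKernel 1 + ENNReal.ofReal (b * Gamma β) •
        (fracKernel β ⋆ₗ (Set.Ioc 0 t).indicator fun s ↦ ENNReal.ofReal (u s)) := by
  refine Set.indicator_le fun x hx ↦ ?_
  rw [Pi.add_apply, Pi.smul_apply, Pi.smul_apply, fracKernel_one_of_pos hx.1, smul_eq_mul,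
    smul_eq_mul, mul_one, ENNReal.ofReal_mul hb, mul_assoc]
  refine (ENNReal.ofReal_le_ofReal (hyp x hx)).trans (ENNReal.ofReal_add_le.trans ?_)
  rw [ENNReal.ofReal_mul hb]
  gcongr
  refine ofReal_integral_rpow_mul_le hβ hx.1.le fun s hs ↦ ?_
  rw [Set.indicator_of_mem (s := Set.Ioc 0 t) ⟨hs.1, hs.2.le.trans hx.2⟩]

end Gronwall

theorem stmt_4_general {b β T a : ℝ} (hb : 0 ≤ b) (hβ : 0 < β) (ha : 0 ≤ a) {u : ℝ → ℝ}
    (hu_int : ∀ t ∈ Set.Ico (0 : ℝ) T, IntervalIntegrable u volume 0 t)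
    (hyp : ∀ t ∈ Set.Ico (0 : ℝ) T,
      u t ≤ a + b * ∫ s in (0 : ℝ)..t, (t - s) ^ (β - 1) * u s) :
    ∀ t ∈ Set.Ico (0 : ℝ) T, u t ≤ a * mittagLeffler β ((b * Gamma β) ^ (1 / β) * t) := by
  intro t ht
  rcases ht.1.eq_or_lt with rfl | ht₀
  · simpa [mittagLeffler_zero hβ.ne'] using hyp 0 ht
  set V : ℝ → ℝ≥0∞ := (Set.Ioc 0 t).indicator fun s ↦ ENNReal.ofReal (u s) with hV_def
  have hu : IntegrableOn u (Set.Ioc 0 t) := (hu_int t ht).1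
  have hVm : AEMeasurable V :=
    (aemeasurable_indicator_iff measurableSet_Ioc).2 hu.aemeasurable.ennreal_ofReal
  have hV₀ : ∀ s < 0, V s = 0 := fun s hs ↦ Set.indicator_of_notMem (fun h ↦ hs.not_gt h.1) _
  have hV_int : ∫⁻ s, V s ≠ ∞ := by
    rw [lintegral_indicator measurableSet_Ioc]
    exact hu.lintegral_lt_top.ne
  have hV_le := indicator_ofReal_le_add_fracKernel_lconvolution hb hβ fun x hx ↦
    hyp x ⟨hx.1.le, hx.2.trans_lt ht.2⟩
  have hVt := le_mul_tsum_fracKernel hβ one_pos ENNReal.ofReal_ne_top ENNReal.ofReal_ne_top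
    hVm hV₀ hV_int hV_le t
  rw [tsum_ofReal_pow_mul_fracKernel_one hβ (by positivity) ht₀, ← ENNReal.ofReal_mul ha, hV_def,
    Set.indicator_of_mem (Set.right_mem_Ioc.2 ht₀)] at hVt
  exact (ENNReal.ofReal_le_ofReal_iff
    (mul_nonneg ha (mittagLeffler_nonneg hβ.le (by positivity)))).1 hVt

/-- The constant-inhomogeneity case of Henry's generalized Gronwall lemma: if
`u ≤ a + b ∫₀ᵗ (t−s)^{β−1}u(s)ds` on `[0,T)` with `a ≥ 0` constant, then with
`θ = (bΓ(β))^{1/β}` one has `u(t) ≤ a E_β(θt)` on `[0,T)`. -/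
theorem stmt_4 (b β T a : ℝ) (hb : 0 < b) (hβ : 0 < β) (hT : 0 < T) (ha : 0 ≤ a)
    (u : ℝ → ℝ)
    (hu_nonneg : ∀ t ∈ Set.Ico (0 : ℝ) T, 0 ≤ u t)
    (hu_int : ∀ t ∈ Set.Ico (0 : ℝ) T, IntervalIntegrable u MeasureTheory.volume 0 t)
    (hyp : ∀ t ∈ Set.Ico (0 : ℝ) T,
      u t ≤ a + b * ∫ s in (0 : ℝ)..t, (t - s) ^ (β - 1) * u s) :
    ∀ t ∈ Set.Ico (0 : ℝ) T,
      u t ≤ a * mittagLeffler β ((b * Real.Gamma β) ^ (1 / β) * t) :=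
  stmt_4_general hb.le hβ ha hu_int hyp
end
end

section
/- Let F : H → H be Lipschitz continuous, let T > 0, let g : [0,T] → H be continuous, and let x ∈ H. Then there exists a unique continuous function y : [0,T] → H such that for all t ∈ [0,T], y(t) = S(t)x + ∫₀ᵗ K(t−s) F(y(s)) ds + g(t), where the integral is a Bochner integral (which exists since ‖K(τ)‖ ≤ (2e)^{−1/2} e^{−τ} τ^{−1/2}). -/
open Real MeasureTheory

noncomputable section

/-- `H = ℓ²(ℤ; ℝ)`, modelling `2π`-periodic `L²` functions via the trigonometric
orthonormal basis. -/
abbrev H : Type := lp (fun _ : ℤ => ℝ) 2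

/-!
The mild equation is a Volterra equation `y = h + ∫₀ᵗ K(t - s) F(y(s)) ds` whose kernel is singular
at `0` but has an integrable bound `‖K(r)‖ ≤ b(r)`. In the weighted norm `sup_t e^{-lt} ‖y(t)‖` the
Picard map has Lipschitz constant at most `L ∫₀ᵀ e^{-lr} b(r) dr`, which tends to `0` as `l → ∞` by
dominated convergence; so for `l` large it is a contraction on all of `[0, T]` at once. Dominated
convergence in `ℓ²` gives the strong continuity of `S` and `K`, and maximizing `|k| e^{-k²τ}` over
`k` gives `b(τ) = (2e)^{-1/2} e^{-τ} τ^{-1/2}`.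
-/

open Filter Set Topology
open scoped ENNReal NNReal BoundedContinuousFunction

lemma existsUnique_fixedPoint_of_dist_equiv_le {X Y : Type*} [MetricSpace Y] [CompleteSpace Y]
    [Nonempty Y] (e : X ≃ Y) {f : X → X} {c : ℝ} (hc : c < 1)
    (hf : ∀ x x', dist (e (f x)) (e (f x')) ≤ c * dist (e x) (e x')) : ∃! x, f x = x := by
  have hcontr : ContractingWith c.toNNReal (e.conj f) := by
    refine ⟨Real.toNNReal_lt_one.2 hc, LipschitzWith.of_dist_le_mul fun y y' => ?_⟩
    calc dist (e.conj f y) (e.conj f y') ≤ c * dist y y' := by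
          simpa using hf (e.symm y) (e.symm y')
      _ ≤ c.toNNReal * dist y y' := by gcongr; exact Real.le_coe_toNNReal c
  refine ⟨e.symm hcontr.fixedPoint, ?_, fun x hx => ?_⟩
  · simpa [e.eq_symm_apply] using hcontr.fixedPoint_isFixedPt.eq
  · refine e.eq_symm_apply.2 (hcontr.fixedPoint_unique ?_)
    simp [Function.IsFixedPt, hx]

section Lp

variable {ι ι' : Type*} {p : ℝ≥0∞}

lemma tendsto_lp_of_dominated {α : Type*} {E : ι → Type*} [∀ i, NormedAddCommGroup (E i)]
    [Fact (1 ≤ p)] (hp : p ≠ ∞) {l : Filter α} {f : α → lp E p} {g : lp E p} {b : ι → ℝ}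
    (hb : Memℓp b p) (hbound : ∀ᶠ a in l, ∀ i, ‖f a i‖ ≤ b i)
    (hlim : ∀ i, Tendsto (fun a => f a i) l (𝓝 (g i))) : Tendsto f l (𝓝 g) := by
  rcases l.eq_or_neBot with rfl | _
  · exact tendsto_bot
  have hp0 : 0 < p.toReal := ENNReal.toReal_pos (zero_lt_one.trans_le Fact.out).ne' hp
  have hg : ∀ i, ‖g i‖ ≤ b i := fun i =>
    le_of_tendsto (hlim i).norm (hbound.mono fun a ha => ha i)
  have hsum : Tendsto (fun a => ∑' i, ‖f a i - g i‖ ^ p.toReal) l (𝓝 (∑' _ : ι, 0)) := by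
    refine tendsto_tsum_of_dominated_convergence ((hb.const_mul 2).summable hp0) (fun i => ?_) ?_
    · simpa [hp0.ne'] using
        (tendsto_iff_norm_sub_tendsto_zero.1 (hlim i)).rpow_const (Or.inr hp0.le)
    · filter_upwards [hbound] with a ha i
      have hdiff : ‖f a i - g i‖ ≤ ‖2 * b i‖ :=
        calc ‖f a i - g i‖ ≤ ‖f a i‖ + ‖g i‖ := norm_sub_le _ _
          _ ≤ 2 * b i := by linarith [ha i, hg i]
          _ ≤ ‖2 * b i‖ := le_abs_self _
      rw [Real.norm_of_nonneg (by positivity)]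
      gcongr
  rw [tendsto_iff_norm_sub_tendsto_zero]
  simpa [lp.norm_eq_tsum_rpow hp0, hp0.ne'] using
    hsum.rpow_const (p := 1 / p.toReal) (Or.inr (by positivity))

lemma norm_lp_le_mul_of_forall_norm_le_mul_equiv {E : ι → Type*} {E' : ι' → Type*}
    [∀ i, NormedAddCommGroup (E i)] [∀ i, NormedAddCommGroup (E' i)] (hp : 0 < p.toReal)
    (σ : ι ≃ ι') {y : lp E p} {x : lp E' p} {c : ℝ} (hc : 0 ≤ c)
    (h : ∀ i, ‖y i‖ ≤ c * ‖x (σ i)‖) : ‖y‖ ≤ c * ‖x‖ := by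
  have hx : HasSum (fun i => ‖x (σ i)‖ ^ p.toReal) (‖x‖ ^ p.toReal) :=
    σ.hasSum_iff.2 (lp.hasSum_norm hp x)
  refine lp.norm_le_of_tsum_le hp (mul_nonneg hc (lp.norm_nonneg' x)) ?_
  calc ∑' i, ‖y i‖ ^ p.toReal ≤ ∑' i, c ^ p.toReal * ‖x (σ i)‖ ^ p.toReal := by
        refine ((lp.memℓp y).summable hp).tsum_le_tsum (fun i => ?_) (hx.summable.mul_left _)
        rw [← Real.mul_rpow hc (norm_nonneg _)]
        gcongr
        exact h i
    _ = (c * ‖x‖) ^ p.toReal := by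
        rw [(hx.mul_left _).tsum_eq, Real.mul_rpow hc (lp.norm_nonneg' x)]

lemma continuousOn_lp_of_apply_eq_smul_equiv {X 𝕜 E : Type*} [TopologicalSpace X]
    [NormedField 𝕜] [NormedAddCommGroup E] [NormedSpace 𝕜 E] [Fact (1 ≤ p)] (hp : p ≠ ∞)
    (σ : ι ≃ ι') {s : Set X} {f : X → lp (fun _ : ι => E) p} {x : lp (fun _ : ι' => E) p}
    {m : X → ι → 𝕜} {c : X → ℝ} (hf : ∀ t ∈ s, ∀ i, f t i = m t i • x (σ i))
    (hm : ∀ i, ContinuousOn (m · i) s) (hc : ContinuousOn c s)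
    (hmc : ∀ t ∈ s, ∀ i, ‖m t i‖ ≤ c t) : ContinuousOn f s := by
  intro t₀ ht₀
  have hp0 : 0 < p.toReal := ENNReal.toReal_pos (zero_lt_one.trans_le Fact.out).ne' hp
  have hbound : Memℓp (fun i => (c t₀ + 1) * ‖x (σ i)‖) p := by
    refine (memℓp_gen ?_ : Memℓp (fun i => ‖x (σ i)‖) p).const_mul _
    simpa only [norm_norm, Function.comp_def] using
      σ.summable_iff.2 ((lp.memℓp x).summable hp0)
  refine tendsto_lp_of_dominated hp hbound ?_ fun i => ?_
  · filter_upwards [self_mem_nhdsWithin, (hc t₀ ht₀).eventually_le_const (lt_add_one _)]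
      with t ht hct i
    rw [hf t ht, norm_smul]
    gcongr
    exact (hmc t ht i).trans hct
  · rw [hf t₀ ht₀]
    refine (((hm i).smul continuousOn_const) t₀ ht₀).tendsto.congr' ?_
    filter_upwards [self_mem_nhdsWithin] with t ht using (hf t ht i).symm

end Lp

section Volterra

variable {E G : Type*} [NormedAddCommGroup E] [NormedSpace ℝ E] [NormedAddCommGroup G]
  [NormedSpace ℝ G]

lemma tendsto_integral_exp_neg_mul_smul_atTop {f : ℝ → E} {T : ℝ} (hT : 0 ≤ T)
    (hf : IntervalIntegrable f volume 0 T) :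
    Tendsto (fun l : ℝ => ∫ r in (0 : ℝ)..T, rexp (-(l * r)) • f r) atTop (𝓝 0) := by
  have hlim := intervalIntegral.tendsto_integral_filter_of_dominated_convergence (μ := volume)
    (a := 0) (b := T) (l := atTop) (F := fun l r => rexp (-(l * r)) • f r) (f := fun _ => 0)
    (fun r => ‖f r‖) ?_ ?_ hf.norm ?_
  · simpa using hlim
  · exact Eventually.of_forall fun l =>
      (Continuous.aestronglyMeasurable (by fun_prop)).smul hf.def'.aestronglyMeasurable
  · filter_upwards [eventually_ge_atTop 0] with l hl
    refine ae_of_all _ fun r hr => ?_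
    rw [uIoc_of_le hT] at hr
    rw [norm_smul, Real.norm_of_nonneg (exp_nonneg _)]
    exact mul_le_of_le_one_left (norm_nonneg _)
      (exp_le_one_iff.2 (neg_nonpos.2 (mul_nonneg hl hr.1.le)))
  · refine ae_of_all _ fun r hr => ?_
    rw [uIoc_of_le hT] at hr
    have hexp : Tendsto (fun l : ℝ => rexp (-(l * r))) atTop (𝓝 0) :=
      tendsto_exp_neg_atTop_nhds_zero.comp (tendsto_id.atTop_mul_const hr.1)
    simpa using hexp.smul_const (f r)

/-- The class of operator kernels allowed in the Volterra equation on `[0, T]`: strongly (not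
necessarily norm) continuous on `(0, T]`, where `b` dominates the operator norm and is integrable.
Nothing is required at `0`, so `K` may blow up there. -/
structure IsDominatedKernel (K : ℝ → G →L[ℝ] E) (b : ℝ → ℝ) (T : ℝ) : Prop where
  continuousOn_apply : ∀ x, ContinuousOn (fun r => K r x) (Ioc 0 T)
  opNorm_le : ∀ r ∈ Ioc 0 T, ‖K r‖ ≤ b r
  intervalIntegrable : IntervalIntegrable b volume 0 T

/-- The Volterra (Duhamel) convolution `∫₀ᵗ K(t - s) φ(s) ds`, as a Bochner integral. -/
def volterraIntegral (K : ℝ → G →L[ℝ] E) (φ : ℝ → G) (t : ℝ) : E :=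
  ∫ s in (0 : ℝ)..t, K (t - s) (φ s)

lemma volterraIntegral_eq_integral_comp_sub (K : ℝ → G →L[ℝ] E) (φ : ℝ → G) (t : ℝ) :
    volterraIntegral K φ t = ∫ r in (0 : ℝ)..t, K r (φ (t - r)) := by
  simpa [volterraIntegral] using
    intervalIntegral.integral_comp_sub_left (a := 0) (b := t) (fun r => K r (φ (t - r))) t

lemma volterraIntegral_congr (K : ℝ → G →L[ℝ] E) {φ ψ : ℝ → G} {t : ℝ} (ht : 0 ≤ t)
    (h : EqOn φ ψ (Icc 0 t)) : volterraIntegral K φ t = volterraIntegral K ψ t :=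
  intervalIntegral.integral_congr fun s hs => by
    rw [uIcc_of_le ht] at hs
    simp only [h hs]

namespace IsDominatedKernel

variable {K : ℝ → G →L[ℝ] E} {b : ℝ → ℝ} {T t : ℝ}

lemma bound_nonneg (hK : IsDominatedKernel K b T) {r : ℝ} (hr : r ∈ Ioc 0 T) : 0 ≤ b r :=
  (norm_nonneg _).trans (hK.opNorm_le r hr)

lemma norm_apply_le (hK : IsDominatedKernel K b T) {r : ℝ} (hr : r ∈ Ioc 0 T) {x : G} {M : ℝ}
    (hx : ‖x‖ ≤ M) : ‖K r x‖ ≤ b r * M :=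
  (K r).le_of_opNorm_le_of_le (hK.opNorm_le r hr) hx

lemma aestronglyMeasurable_apply_comp_sub (hK : IsDominatedKernel K b T) {φ : ℝ → G}
    (hφ : Continuous φ) (t : ℝ) :
    AEStronglyMeasurable (fun r => K r (φ (t - r))) (volume.restrict (Ioc 0 T)) := by
  -- Carathéodory functions, here continuous in `s` and measurable in `r`, are jointly measurable.
  have hjoint : StronglyMeasurable
      (Function.uncurry fun (s : ℝ) (r : Ioc 0 T) => K r (φ s)) :=
    stronglyMeasurable_uncurry_of_continuous_of_stronglyMeasurable
      (fun r => (K r).continuous.comp hφ)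
      fun s => (hK.continuousOn_apply (φ s)).domRestrict.stronglyMeasurable
  have hsub : StronglyMeasurable fun r : Ioc 0 T => K r (φ (t - r)) :=
    hjoint.comp_measurable (by fun_prop : Measurable fun r : Ioc 0 T => (t - r, r))
  rw [← map_comap_subtype_coe measurableSet_Ioc,
    (MeasurableEmbedding.subtype_coe measurableSet_Ioc).aestronglyMeasurable_map_iff]
  exact hsub.aestronglyMeasurable

lemma intervalIntegrable_apply_comp_sub (hK : IsDominatedKernel K b T) (hT : 0 ≤ T)
    (φ : ℝ →ᵇ G) (t : ℝ) :
    IntervalIntegrable (fun r => K r (φ (t - r))) volume 0 T := by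
  refine (hK.intervalIntegrable.mul_const ‖φ‖).mono_fun' ?_ ?_
  · rw [uIoc_of_le hT]
    exact hK.aestronglyMeasurable_apply_comp_sub φ.continuous t
  · rw [uIoc_of_le hT]
    filter_upwards [ae_restrict_mem measurableSet_Ioc] with r hr
    exact hK.norm_apply_le hr (φ.norm_coe_le_norm _)

lemma volterraIntegral_sub (hK : IsDominatedKernel K b T) (φ ψ : ℝ →ᵇ G) (ht : t ∈ Icc 0 T) :
    volterraIntegral K (φ - ψ) t = volterraIntegral K φ t - volterraIntegral K ψ t := by
  have hsub : uIcc 0 t ⊆ uIcc 0 T := uIcc_subset_uIcc_left (Icc_subset_uIcc ht)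
  have hint (χ : ℝ →ᵇ G) : IntervalIntegrable (fun r => K r (χ (t - r))) volume 0 t :=
    (hK.intervalIntegrable_apply_comp_sub (ht.1.trans ht.2) χ t).mono_set hsub
  simp only [volterraIntegral_eq_integral_comp_sub, Pi.sub_apply, map_sub]
  exact intervalIntegral.integral_sub (hint φ) (hint ψ)

lemma continuousOn_volterraIntegral (hK : IsDominatedKernel K b T) (φ : ℝ →ᵇ G) :
    ContinuousOn (volterraIntegral K φ) (Icc 0 T) := by
  intro t₀ ht₀
  -- Cutting off outside `(0, T]` lets the moving endpoint range over the interior of `(-1, T + 1)`.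
  let k : ℝ → ℝ → E := fun t => (Ioc 0 T).indicator fun r => K r (φ (t - r))
  have hparam : ContinuousAt (fun q : ℝ × ℝ => ∫ r in (0 : ℝ)..q.2, k q.1 r) (t₀, t₀) := by
    refine intervalIntegral.continuousAt_parametric_primitive_of_dominated
      ((Ioc 0 T).indicator fun r => b r * ‖φ‖) (-1) (T + 1) (fun t => ?_) ?_ ?_ ?_
      ⟨by norm_num, by linarith [ht₀.1.trans ht₀.2]⟩ ⟨by linarith [ht₀.1], by linarith [ht₀.2]⟩
      Real.volume_singleton
    · exact ((aestronglyMeasurable_indicator_iff measurableSet_Ioc).2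
        (hK.aestronglyMeasurable_apply_comp_sub φ.continuous t)).restrict
    · refine Eventually.of_forall fun t => ae_of_all _ fun r => ?_
      rw [norm_indicator_eq_indicator_norm]
      exact indicator_le_indicator' fun hr => hK.norm_apply_le hr (φ.norm_coe_le_norm _)
    · have hb := (intervalIntegrable_iff_integrableOn_Ioc_of_le (ht₀.1.trans ht₀.2)).1
        (hK.intervalIntegrable.mul_const ‖φ‖)
      exact ((integrable_indicator_iff measurableSet_Ioc).2 hb).intervalIntegrable
    · refine ae_of_all _ fun r => ?_
      by_cases hr : r ∈ Ioc 0 T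
      · simp only [k, indicator_of_mem hr]
        fun_prop
      · simp only [k, indicator_of_notMem hr]
        fun_prop
  have hdiag : ContinuousAt (fun t : ℝ => ∫ r in (0 : ℝ)..t, k t r) t₀ :=
    hparam.comp₂ continuousAt_id continuousAt_id
  refine hdiag.continuousWithinAt.congr_of_mem (fun t ht => ?_) ht₀
  rw [volterraIntegral_eq_integral_comp_sub]
  refine intervalIntegral.integral_congr_ae (ae_of_all _ fun r hr => ?_)
  rw [uIoc_of_le ht.1] at hr
  have hrT : r ∈ Ioc 0 T := ⟨hr.1, hr.2.trans ht.2⟩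
  simp only [k, indicator_of_mem hrT]

lemma exp_neg_mul_norm_apply_le (hK : IsDominatedKernel K b T) (l t : ℝ) {r : ℝ}
    (hr : r ∈ Ioc 0 T) (x : G) :
    rexp (-(l * t)) * ‖K r x‖ ≤ rexp (-(l * r)) * b r * (rexp (-(l * (t - r))) * ‖x‖) := by
  have hexp : rexp (-(l * t)) = rexp (-(l * r)) * rexp (-(l * (t - r))) := by
    rw [← exp_add]
    ring_nf
  calc rexp (-(l * t)) * ‖K r x‖ ≤ rexp (-(l * t)) * (b r * ‖x‖) := by
        gcongr
        exact hK.norm_apply_le hr le_rfl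
    _ = rexp (-(l * r)) * b r * (rexp (-(l * (t - r))) * ‖x‖) := by
        rw [hexp]
        ring

lemma exp_neg_mul_norm_volterraIntegral_le (hK : IsDominatedKernel K b T) {φ : ℝ → G} {l M : ℝ}
    (ht : t ∈ Icc 0 T) (hφ : ∀ s ∈ Icc 0 t, rexp (-(l * s)) * ‖φ s‖ ≤ M) :
    rexp (-(l * t)) * ‖volterraIntegral K φ t‖ ≤
      (∫ r in (0 : ℝ)..T, rexp (-(l * r)) * b r) * M := by
  have hb : IntervalIntegrable (fun r => rexp (-(l * r)) * b r * M) volume 0 T :=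
    (hK.intervalIntegrable.continuousOn_mul (by fun_prop)).mul_const M
  have hM : 0 ≤ M := (by positivity : 0 ≤ rexp (-(l * 0)) * ‖φ 0‖).trans (hφ 0 ⟨le_rfl, ht.1⟩)
  have hsub : uIcc 0 t ⊆ uIcc 0 T := uIcc_subset_uIcc_left (Icc_subset_uIcc ht)
  have hnorm (v : E) : ‖rexp (-(l * t)) • v‖ = rexp (-(l * t)) * ‖v‖ := by
    rw [norm_smul, norm_of_nonneg (exp_nonneg _)]
  rw [volterraIntegral_eq_integral_comp_sub, ← hnorm, ← intervalIntegral.integral_smul]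
  calc ‖∫ r in (0 : ℝ)..t, rexp (-(l * t)) • K r (φ (t - r))‖
      ≤ ∫ r in (0 : ℝ)..t, rexp (-(l * r)) * b r * M := by
        refine intervalIntegral.norm_integral_le_of_norm_le ht.1 (ae_of_all _ fun r hr => ?_)
          (hb.mono_set hsub)
        have hrT : r ∈ Ioc 0 T := ⟨hr.1, hr.2.trans ht.2⟩
        have hbr := hK.bound_nonneg hrT
        rw [hnorm]
        refine (hK.exp_neg_mul_norm_apply_le l t hrT _).trans ?_
        gcongr
        exact hφ _ ⟨by linarith [hr.2], by linarith [hr.1]⟩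
    _ ≤ ∫ r in (0 : ℝ)..T, rexp (-(l * r)) * b r * M := by
        refine intervalIntegral.integral_mono_interval le_rfl ht.1 ht.2 ?_ hb
        filter_upwards [ae_restrict_mem measurableSet_Ioc] with r hr
        have hbr := hK.bound_nonneg hr
        positivity
    _ = (∫ r in (0 : ℝ)..T, rexp (-(l * r)) * b r) * M := intervalIntegral.integral_mul_const _ _

end IsDominatedKernel

/-- `y` is a continuous solution on `[0, T]` of `y(t) = h(t) + ∫₀ᵗ K(t - s) F(y(s)) ds`; the values
of `y` outside `[0, T]` are irrelevant. -/
def IsVolterraSolution (K : ℝ → G →L[ℝ] E) (F : E → G) (h : ℝ → E) (T : ℝ) (y : ℝ → E) : Prop :=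
  ContinuousOn y (Icc 0 T) ∧ ∀ t ∈ Icc 0 T, y t = h t + volterraIntegral K (F ∘ y) t

lemma IsVolterraSolution.congr {K : ℝ → G →L[ℝ] E} {F : E → G} {h y z : ℝ → E} {T : ℝ}
    (hy : IsVolterraSolution K F h T y) (hzy : EqOn z y (Icc 0 T)) :
    IsVolterraSolution K F h T z := by
  refine ⟨hy.1.congr hzy, fun t ht => ?_⟩
  have hF : EqOn (F ∘ z) (F ∘ y) (Icc 0 t) := fun s hs =>
    congrArg F (hzy ⟨hs.1, hs.2.trans ht.2⟩)
  rw [hzy ht, hy.2 t ht, volterraIntegral_congr K ht.1 hF]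

/-- Multiplication by the weight `t ↦ e^{-lt}`: the distance between `expWeight E s l u` and
`expWeight E s l v` is the weighted (Bielecki) distance between `u` and `v`. -/
def expWeight (E : Type*) [NormedAddCommGroup E] [NormedSpace ℝ E] (s : Set ℝ) (l : ℝ) :
    C(s, E) ≃ C(s, E) where
  toFun u := ⟨fun t => rexp (-(l * t)) • u t, by fun_prop⟩
  invFun u := ⟨fun t => rexp (l * t) • u t, by fun_prop⟩
  left_inv u := by ext t; simp [smul_smul, ← exp_add]
  right_inv u := by ext t; simp [smul_smul, ← exp_add]

lemma dist_expWeight_apply {s : Set ℝ} (l : ℝ) (u v : C(s, E)) (t : s) :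
    dist (expWeight E s l u t) (expWeight E s l v t) = rexp (-(l * t)) * ‖u t - v t‖ := by
  simp [expWeight, dist_eq_norm, ← smul_sub, norm_smul]

lemma exp_neg_mul_dist_comp_le {Y : Type*} [PseudoMetricSpace Y] {s : Set ℝ} [CompactSpace s]
    {F : E → Y} {L : ℝ≥0} (hF : LipschitzWith L F) (l : ℝ) (y z : C(s, E)) (t : s) :
    rexp (-(l * t)) * dist (F (y t)) (F (z t)) ≤
      L * dist (expWeight E s l y) (expWeight E s l z) :=
  calc rexp (-(l * t)) * dist (F (y t)) (F (z t))
      ≤ rexp (-(l * t)) * (L * ‖y t - z t‖) := by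
        gcongr
        rw [← dist_eq_norm]
        exact hF.dist_le_mul _ _
    _ = L * dist (expWeight E s l y t) (expWeight E s l z t) := by
        rw [dist_expWeight_apply, mul_left_comm]
    _ ≤ L * dist (expWeight E s l y) (expWeight E s l z) := by
        gcongr
        exact ContinuousMap.dist_apply_le_dist t

/-- The extension of a path on `[0, T]` to `ℝ` by its end values, which is `Set.IccExtend` bundled
as a bounded continuous function. -/
def boundedIccExtend {T : ℝ} (hT : 0 ≤ T) (y : C(Icc 0 T, E)) : ℝ →ᵇ E :=
  (BoundedContinuousFunction.mkOfCompact y).compContinuous ⟨projIcc 0 T hT, continuous_projIcc⟩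

section Picard

variable {K : ℝ → G →L[ℝ] E} {b : ℝ → ℝ} {F : E → G} {L : ℝ≥0} {h : ℝ → E} {T : ℝ}

/-- The Picard map `y ↦ h + ∫₀ᵗ K(t - s) F(y(s)) ds` on `C([0, T], E)`, whose fixed points are the
solutions of the Volterra equation. -/
def picardMap (hK : IsDominatedKernel K b T) (hF : LipschitzWith L F)
    (hh : ContinuousOn h (Icc 0 T)) (hT : 0 ≤ T) (y : C(Icc 0 T, E)) : C(Icc 0 T, E) where
  toFun t := h t + volterraIntegral K ((boundedIccExtend hT y).comp F hF) t
  continuous_toFun :=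
    (hh.add (hK.continuousOn_volterraIntegral ((boundedIccExtend hT y).comp F hF))).domRestrict

lemma picardMap_apply (hK : IsDominatedKernel K b T) (hF : LipschitzWith L F)
    (hh : ContinuousOn h (Icc 0 T)) (hT : 0 ≤ T) (y : C(Icc 0 T, E)) (t : Icc 0 T) :
    picardMap hK hF hh hT y t = h t + volterraIntegral K (F ∘ IccExtend hT y) t := rfl

lemma picardMap_eq_self_iff (hK : IsDominatedKernel K b T) (hF : LipschitzWith L F)
    (hh : ContinuousOn h (Icc 0 T)) (hT : 0 ≤ T) (y : C(Icc 0 T, E)) :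
    picardMap hK hF hh hT y = y ↔ IsVolterraSolution K F h T (IccExtend hT y) := by
  constructor
  · intro hy
    refine ⟨y.continuous.Icc_extend'.continuousOn, fun t ht => ?_⟩
    rw [IccExtend_of_mem hT y ht, ← picardMap_apply hK hF hh hT y ⟨t, ht⟩, hy]
  · intro hy
    ext t
    rw [picardMap_apply, ← hy.2 t t.2, IccExtend_val]

lemma dist_expWeight_picardMap_le (hK : IsDominatedKernel K b T) (hF : LipschitzWith L F)
    (hh : ContinuousOn h (Icc 0 T)) (hT : 0 ≤ T) (l : ℝ) (y z : C(Icc 0 T, E)) :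
    dist (expWeight E (Icc 0 T) l (picardMap hK hF hh hT y))
        (expWeight E (Icc 0 T) l (picardMap hK hF hh hT z)) ≤
      (∫ r in (0 : ℝ)..T, rexp (-(l * r)) * b r) * L *
        dist (expWeight E (Icc 0 T) l y) (expWeight E (Icc 0 T) l z) := by
  have : Nonempty (Icc 0 T) := ⟨⟨0, le_rfl, hT⟩⟩
  refine ContinuousMap.dist_le_iff_of_nonempty.2 fun t => ?_
  have hdiff : picardMap hK hF hh hT y t - picardMap hK hF hh hT z t =
      volterraIntegral K (F ∘ IccExtend hT y - F ∘ IccExtend hT z) t := by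
    rw [picardMap_apply, picardMap_apply, add_sub_add_left_eq_sub]
    exact (hK.volterraIntegral_sub ((boundedIccExtend hT y).comp F hF)
      ((boundedIccExtend hT z).comp F hF) t.2).symm
  rw [dist_expWeight_apply, hdiff, mul_assoc]
  refine hK.exp_neg_mul_norm_volterraIntegral_le t.2 fun s hs => ?_
  have hsT : s ∈ Icc 0 T := ⟨hs.1, hs.2.trans t.2.2⟩
  simpa only [Pi.sub_apply, Function.comp_apply, IccExtend_of_mem hT _ hsT, dist_eq_norm] using
    exp_neg_mul_dist_comp_le hF l y z ⟨s, hsT⟩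

theorem exists_isVolterraSolution_forall_eqOn [CompleteSpace E] (hK : IsDominatedKernel K b T)
    (hF : LipschitzWith L F) (hh : ContinuousOn h (Icc 0 T)) (hT : 0 ≤ T) :
    ∃ y, IsVolterraSolution K F h T y ∧
      ∀ z, IsVolterraSolution K F h T z → EqOn z y (Icc 0 T) := by
  obtain ⟨l, hl⟩ : ∃ l : ℝ, (∫ r in (0 : ℝ)..T, rexp (-(l * r)) * b r) * L < 1 := by
    have hlim :=
      (tendsto_integral_exp_neg_mul_smul_atTop hT hK.intervalIntegrable).mul_const (L : ℝ)
    rw [zero_mul] at hlim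
    exact (hlim.eventually_lt_const one_pos).exists
  obtain ⟨u, hu, huniq⟩ := existsUnique_fixedPoint_of_dist_equiv_le (expWeight E (Icc 0 T) l) hl
    (dist_expWeight_picardMap_le hK hF hh hT l)
  refine ⟨IccExtend hT u, (picardMap_eq_self_iff hK hF hh hT u).1 hu, fun z hz => ?_⟩
  let v : C(Icc 0 T, E) := ⟨_, hz.1.domRestrict⟩
  have hvz : EqOn (IccExtend hT v) z (Icc 0 T) := fun t ht => IccExtend_of_mem hT v ht
  rw [← huniq v ((picardMap_eq_self_iff hK hF hh hT v).2 (hz.congr hvz))]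
  exact hvz.symm

end Picard

end Volterra

section HeatSemigroup

lemma abs_mul_exp_neg_le (k : ℝ) {τ : ℝ} (hτ : 0 < τ) :
    |k| * rexp (-(1 + k ^ 2) * τ) ≤
      (2 * rexp 1) ^ (-(1 / 2) : ℝ) * rexp (-τ) * τ ^ (-(1 / 2) : ℝ) := by
  have hgauss : |k| * rexp (-(k ^ 2 * τ)) ≤ (2 * rexp 1 * τ) ^ (-(1 / 2) : ℝ) := by
    -- For `a = 2k²τ` this is `a e^{-a} ≤ e^{-1}`, that is, `a ≤ e^{a - 1}`.
    have hsq : (|k| * rexp (-(k ^ 2 * τ))) ^ 2 ≤ (2 * rexp 1 * τ)⁻¹ := by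
      rw [← one_div, le_div_iff₀ (by positivity)]
      calc (|k| * rexp (-(k ^ 2 * τ))) ^ 2 * (2 * rexp 1 * τ)
          = 2 * k ^ 2 * τ * (rexp (-(k ^ 2 * τ)) ^ 2 * rexp 1) := by
            rw [mul_pow, sq_abs]
            ring
        _ = 2 * k ^ 2 * τ * rexp (-(2 * k ^ 2 * τ - 1)) := by
            rw [← exp_nat_mul, ← exp_add]
            push_cast
            ring_nf
        _ ≤ rexp (2 * k ^ 2 * τ - 1) * rexp (-(2 * k ^ 2 * τ - 1)) := by
            gcongr
            linarith [add_one_le_exp (2 * k ^ 2 * τ - 1)]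
        _ = 1 := by rw [← exp_add, add_neg_cancel, exp_zero]
    rw [rpow_neg (by positivity), ← sqrt_eq_rpow, ← sqrt_inv]
    exact le_sqrt_of_sq_le hsq
  calc |k| * rexp (-(1 + k ^ 2) * τ) = |k| * rexp (-(k ^ 2 * τ)) * rexp (-τ) := by
        rw [mul_assoc, ← exp_add]
        ring_nf
    _ ≤ (2 * rexp 1 * τ) ^ (-(1 / 2) : ℝ) * rexp (-τ) := by gcongr
    _ = (2 * rexp 1) ^ (-(1 / 2) : ℝ) * rexp (-τ) * τ ^ (-(1 / 2) : ℝ) := by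
        rw [mul_rpow (by positivity) hτ.le]
        ring

lemma continuousOn_semigroup_apply {S : ℝ → H →L[ℝ] H}
    (hS : ∀ t : ℝ, 0 ≤ t → ∀ (x : H) (k : ℤ),
      (S t x) k = Real.exp (-(1 + (k : ℝ) ^ 2) * t) * x k) (x : H) :
    ContinuousOn (fun t => S t x) (Ici 0) := by
  refine continuousOn_lp_of_apply_eq_smul_equiv (by norm_num) (Equiv.refl ℤ)
    (m := fun t k => rexp (-(1 + (k : ℝ) ^ 2) * t)) (c := fun _ => 1) (fun t ht => hS t ht x)
    (fun k => by fun_prop) continuousOn_const fun t ht k => ?_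
  rw [norm_of_nonneg (exp_nonneg _), exp_le_one_iff, neg_mul, neg_nonpos]
  exact mul_nonneg (by positivity) ht

lemma isDominatedKernel_gradSemigroup {K : ℝ → H →L[ℝ] H}
    (hK : ∀ t : ℝ, 0 < t → ∀ (x : H) (k : ℤ),
      (K t x) k = -(k : ℝ) * Real.exp (-(1 + (k : ℝ) ^ 2) * t) * x (-k)) (T : ℝ) :
    IsDominatedKernel K
      (fun τ => (2 * rexp 1) ^ (-(1 / 2) : ℝ) * rexp (-τ) * τ ^ (-(1 / 2) : ℝ)) T := by
  have hcoeff : ∀ τ ∈ Ioc 0 T, ∀ k : ℤ, ‖-(k : ℝ) * rexp (-(1 + (k : ℝ) ^ 2) * τ)‖ ≤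
      (2 * rexp 1) ^ (-(1 / 2) : ℝ) * rexp (-τ) * τ ^ (-(1 / 2) : ℝ) := by
    intro τ hτ k
    simpa only [norm_mul, norm_neg, norm_eq_abs, abs_exp] using abs_mul_exp_neg_le k hτ.1
  refine ⟨fun x => ?_, fun τ hτ => ?_, ?_⟩
  · refine continuousOn_lp_of_apply_eq_smul_equiv (by norm_num) (Equiv.neg ℤ)
      (fun τ hτ => hK τ hτ.1 x) (fun k => by fun_prop) ?_ hcoeff
    exact ContinuousOn.mul (by fun_prop)
      (continuousOn_id.rpow_const fun τ hτ => Or.inl hτ.1.ne')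
  · have hτ0 : 0 < τ := hτ.1
    refine ContinuousLinearMap.opNorm_le_bound _ (by positivity) fun x => ?_
    refine norm_lp_le_mul_of_forall_norm_le_mul_equiv (by norm_num) (Equiv.neg ℤ) (by positivity)
      fun k => ?_
    rw [hK τ hτ0, norm_mul]
    exact mul_le_mul_of_nonneg_right (hcoeff τ hτ k) (norm_nonneg _)
  · exact (intervalIntegral.intervalIntegrable_rpow' (by norm_num)).continuousOn_mul (by fun_prop)

end HeatSemigroup

/-- Existence and uniqueness of the (pathwise) mild solution: if `S(t)` is the semigroup
`(S(t)x)_k = e^{−(1+k²)t} x_k`, `K(t)` is the operator `(K(t)x)_k = −k e^{−(1+k²)t} x_{−k}`,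
`F : H → H` is Lipschitz, `g : [0,T] → H` is continuous and `x ∈ H`, then there is a unique
continuous `y : [0,T] → H` with `y(t) = S(t)x + ∫₀ᵗ K(t−s) F(y(s)) ds + g(t)` on `[0,T]`. -/
theorem stmt_7 (S K : ℝ → H →L[ℝ] H)
    (hS : ∀ t : ℝ, 0 ≤ t → ∀ (x : H) (k : ℤ),
      (S t x) k = Real.exp (-(1 + (k : ℝ) ^ 2) * t) * x k)
    (hK : ∀ t : ℝ, 0 < t → ∀ (x : H) (k : ℤ),
      (K t x) k = -(k : ℝ) * Real.exp (-(1 + (k : ℝ) ^ 2) * t) * x (-k))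
    (F : H → H) (hF : ∃ L : NNReal, LipschitzWith L F)
    (T : ℝ) (hT : 0 < T)
    (g : ℝ → H) (hg : ContinuousOn g (Set.Icc 0 T)) (x : H) :
    ∃ y : ℝ → H,
      (ContinuousOn y (Set.Icc 0 T) ∧
        ∀ t ∈ Set.Icc (0 : ℝ) T,
          y t = S t x + (∫ s in (0 : ℝ)..t, K (t - s) (F (y s))) + g t) ∧
      ∀ z : ℝ → H,
        (ContinuousOn z (Set.Icc 0 T) ∧
          ∀ t ∈ Set.Icc (0 : ℝ) T,
            z t = S t x + (∫ s in (0 : ℝ)..t, K (t - s) (F (z s))) + g t) →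
        ∀ t ∈ Set.Icc (0 : ℝ) T, z t = y t := by
  obtain ⟨L, hL⟩ := hF
  have hh : ContinuousOn (fun t => S t x + g t) (Icc 0 T) :=
    ((continuousOn_semigroup_apply hS x).mono Icc_subset_Ici_self).add hg
  have hmild (y : ℝ → H) : IsVolterraSolution K F (fun t => S t x + g t) T y ↔
      ContinuousOn y (Icc 0 T) ∧ ∀ t ∈ Icc (0 : ℝ) T,
        y t = S t x + (∫ s in (0 : ℝ)..t, K (t - s) (F (y s))) + g t := by
    simp only [IsVolterraSolution, volterraIntegral, Function.comp_apply, add_right_comm]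
  simp only [← hmild]
  exact exists_isVolterraSolution_forall_eqOn (isDominatedKernel_gradSemigroup hK T) hL hh hT.le
end
end

section
/- Let F : H → H be Lipschitz continuous, T > 0, x ∈ H, and g : [0,T] → H continuous. For n ∈ ℕ let P_n : H → H be the coordinate projection onto the coordinates |k| ≤ n and set K_n(t) = K(t) ∘ P_n. Let y : [0,T] → H and y_n : [0,T] → H (n ∈ ℕ) be continuous functions satisfying y(t) = S(t)x + ∫₀ᵗ K(t−s)F(y(s))ds + g(t) and y_n(t) = S(t)x + ∫₀ᵗ K_n(t−s)F(y_n(s))ds + g(t) for all t ∈ [0,T]. Then sup_{t∈[0,T]} ‖y_n(t) − y(t)‖ → 0 as n → ∞. -/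
/-!
The difference `u = yₙ - y` splits as
`u t = ∫ Kₙ (t - s) (F (yₙ s) - F (y s)) + ∫ (Kₙ - K) (t - s) (F (y s))`.
The kernels `Kₙ` share the majorant `r ^ (-1/2)`. It is singular but integrable, so a Gronwall
inequality in the weighted norm `sup exp (-λ t) ‖u t‖` absorbs the first term: for large `λ` the
weighted mass `∫ exp (-λ r) r ^ (-1/2)` is at most `1/2`. The second term tends to zero because
giving up a little integrability in time buys decay in frequency:
`|k| exp (-k² r) ≤ |k| ^ (-1/2) r ^ (-3/4)`.
-/

open Real MeasureTheory Filter

noncomputable section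

open Set Topology

lemma tendstoUniformlyOn_of_norm_sub_le {α ι E : Type*} [SeminormedAddCommGroup E] {l : Filter ι}
    {u : ι → α → E} {v : α → E} {s : Set α} {b : ι → ℝ} (hb : Tendsto b l (𝓝 0))
    (huv : ∀ n, ∀ t ∈ s, ‖u n t - v t‖ ≤ b n) : TendstoUniformlyOn u v l s := by
  rw [Metric.tendstoUniformlyOn_iff]
  intro ε hε
  filter_upwards [hb.eventually_lt_const hε] with n hn t ht
  rw [dist_comm, dist_eq_norm]
  exact (huv n t ht).trans_lt hn

section LpSpace

variable {α β : Type*} {E : α → Type*} {E' : β → Type*} [∀ i, NormedAddCommGroup (E i)]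
  [∀ j, NormedAddCommGroup (E' j)] {p : ENNReal} {σ : α → β} {c : ℝ}

lemma lp_norm_le_mul_norm_of_forall_norm_apply_le (hp : 0 < p.toReal) (hσ : σ.Injective)
    (hc : 0 ≤ c) {u : lp E p} {v : lp E' p} (huv : ∀ i, ‖u i‖ ≤ c * ‖v (σ i)‖) :
    ‖u‖ ≤ c * ‖v‖ := by
  have hv : 0 ≤ ‖v‖ := lp.norm_nonneg' v
  refine lp.norm_le_of_forall_sum_le hp (mul_nonneg hc hv) fun s => ?_
  calc ∑ i ∈ s, ‖u i‖ ^ p.toReal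
      ≤ ∑ i ∈ s, (c * ‖v (σ i)‖) ^ p.toReal := by
        gcongr with i
        exact huv i
    _ = c ^ p.toReal * ∑ j ∈ s.map ⟨σ, hσ⟩, ‖v j‖ ^ p.toReal := by
        simp only [Finset.sum_map, Function.Embedding.coeFn_mk, Finset.mul_sum,
          mul_rpow hc (norm_nonneg _)]
    _ ≤ c ^ p.toReal * ‖v‖ ^ p.toReal := by
        gcongr
        exact lp.sum_rpow_le_norm_rpow hp v _
    _ = (c * ‖v‖) ^ p.toReal := (mul_rpow hc hv).symm

lemma lp_opNorm_le_of_forall_norm_apply_le [∀ i, NormedSpace ℝ (E i)]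
    [∀ j, NormedSpace ℝ (E' j)] [Fact (1 ≤ p)] (hp : p ≠ ⊤) (hσ : σ.Injective) (hc : 0 ≤ c)
    {A : lp E' p →L[ℝ] lp E p} (hA : ∀ x i, ‖A x i‖ ≤ c * ‖x (σ i)‖) : ‖A‖ ≤ c :=
  A.opNorm_le_bound hc fun x => lp_norm_le_mul_norm_of_forall_norm_apply_le
    (ENNReal.toReal_pos (zero_lt_one.trans_le Fact.out).ne' hp) hσ hc (hA x)

end LpSpace

lemma tendsto_natCast_add_one_rpow_neg {b : ℝ} (hb : 0 < b) :
    Tendsto (fun n : ℕ => ((n : ℝ) + 1) ^ (-b)) atTop (𝓝 0) :=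
  (tendsto_rpow_neg_atTop hb).comp
    (tendsto_atTop_add_const_right _ _ tendsto_natCast_atTop_atTop)

/-! ### Convolution kernels on an interval -/

lemma intervalIntegrable_comp_const_sub {E : Type*} [NormedAddCommGroup E] {k : ℝ → E} {T t : ℝ}
    (hk : IntervalIntegrable k volume 0 T) (ht : t ∈ Icc 0 T) :
    IntervalIntegrable (fun s => k (t - s)) volume 0 t := by
  have hk' : IntervalIntegrable k volume t 0 :=
    (hk.mono_set (uIcc_subset_uIcc_left (Icc_subset_uIcc ht))).symm
  simpa using hk'.comp_sub_left t

lemma tendsto_integral_exp_neg_mul_mul_atTop {k : ℝ → ℝ} {T : ℝ} (hT : 0 ≤ T)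
    (hk : IntervalIntegrable k volume 0 T) :
    Tendsto (fun lam : ℝ => ∫ r in 0..T, exp (-(lam * r)) * k r) atTop (𝓝 0) := by
  suffices Tendsto (fun lam : ℝ => ∫ r in 0..T, exp (-(lam * r)) * k r) atTop
      (𝓝 (∫ _ in 0..T, 0)) by
    simpa only [intervalIntegral.integral_zero] using this
  refine intervalIntegral.tendsto_integral_filter_of_dominated_convergence (fun r => ‖k r‖)
    (.of_forall fun lam => ?_) ?_ hk.norm (.of_forall fun r hr => ?_)
  · exact (by fun_prop : Continuous fun r => exp (-(lam * r))).aestronglyMeasurable.mul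
      hk.aestronglyMeasurable_restrict_uIoc
  · filter_upwards [eventually_ge_atTop 0] with lam hlam
    refine .of_forall fun r hr => ?_
    have hr0 : 0 < r := (uIoc_of_le hT ▸ hr).1
    have hexp : exp (-(lam * r)) ≤ 1 := exp_le_one_iff.2 (by nlinarith)
    rw [norm_mul, norm_of_nonneg (exp_pos _).le]
    exact mul_le_of_le_one_left (norm_nonneg _) hexp
  · have hr0 : 0 < r := (uIoc_of_le hT ▸ hr).1
    have hexp : Tendsto (fun lam => exp (-(lam * r))) atTop (𝓝 0) :=
      tendsto_exp_neg_atTop_nhds_zero.comp (tendsto_id.atTop_mul_const hr0)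
    simpa using hexp.mul_const (k r)

lemma integral_comp_const_sub_le {k : ℝ → ℝ} {T t : ℝ} (hk : IntervalIntegrable k volume 0 T)
    (hk0 : ∀ r ∈ Ioc 0 T, 0 ≤ k r) (ht : t ∈ Icc 0 T) :
    ∫ s in 0..t, k (t - s) ≤ ∫ r in 0..T, k r := by
  rw [intervalIntegral.integral_comp_sub_left, sub_self, sub_zero]
  exact intervalIntegral.integral_mono_interval le_rfl ht.1 ht.2
    (ae_restrict_of_forall_mem measurableSet_Ioc hk0) hk

lemma integral_comp_const_sub_mul_le {k v : ℝ → ℝ} {T t lam m : ℝ}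
    (hk : IntervalIntegrable k volume 0 T) (hk0 : ∀ r ∈ Ioc 0 T, 0 ≤ k r)
    (hv : ContinuousOn v (Icc 0 T)) (hm : 0 ≤ m) (hvm : ∀ s ∈ Icc 0 T, v s ≤ exp (lam * s) * m)
    (ht : t ∈ Icc 0 T) :
    ∫ s in 0..t, k (t - s) * v s ≤
      exp (lam * t) * m * ∫ r in 0..T, exp (-(lam * r)) * k r := by
  let w : ℝ → ℝ := fun r => exp (-(lam * r)) * k r
  have hw : IntervalIntegrable w volume 0 T := hk.continuousOn_mul (by fun_prop)
  have hw0 : ∀ r ∈ Ioc 0 T, 0 ≤ w r := fun r hr => mul_nonneg (exp_pos _).le (hk0 r hr)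
  have hsub : uIcc 0 t ⊆ Icc 0 T := by
    rw [uIcc_of_le ht.1]
    exact Icc_subset_Icc_right ht.2
  calc ∫ s in 0..t, k (t - s) * v s
      ≤ ∫ s in 0..t, exp (lam * t) * m * w (t - s) := by
        refine intervalIntegral.integral_mono_on_of_le_Ioo ht.1
          ((intervalIntegrable_comp_const_sub hk ht).mul_continuousOn (hv.mono hsub))
          ((intervalIntegrable_comp_const_sub hw ht).const_mul _) fun s hs => ?_
        calc k (t - s) * v s
            ≤ k (t - s) * (exp (lam * s) * m) :=
              mul_le_mul_of_nonneg_left (hvm s ⟨hs.1.le, hs.2.le.trans ht.2⟩)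
                (hk0 _ ⟨sub_pos.2 hs.2, by linarith [hs.1, ht.2]⟩)
          _ = exp (lam * t) * m * w (t - s) := by
              rw [show lam * s = lam * t + -(lam * (t - s)) by ring, exp_add]
              ring
    _ = exp (lam * t) * m * ∫ s in 0..t, w (t - s) := intervalIntegral.integral_const_mul _ _
    _ ≤ exp (lam * t) * m * ∫ r in 0..T, w r := by
        gcongr
        exact integral_comp_const_sub_le hw hw0 ht

theorem le_two_mul_exp_mul_of_le_add_integral {k v : ℝ → ℝ} {T lam a : ℝ} (hlam : 0 ≤ lam)
    (hk : IntervalIntegrable k volume 0 T) (hk0 : ∀ r ∈ Ioc 0 T, 0 ≤ k r)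
    (hmass : ∫ r in 0..T, exp (-(lam * r)) * k r ≤ 1 / 2) (ha : 0 ≤ a)
    (hv : ContinuousOn v (Icc 0 T))
    (hle : ∀ t ∈ Icc 0 T, v t ≤ a + ∫ s in 0..t, k (t - s) * v s) :
    ∀ t ∈ Icc 0 T, v t ≤ 2 * exp (lam * t) * a := by
  intro t ht
  obtain ⟨τ, hτ, hmax⟩ := isCompact_Icc.exists_isMaxOn ⟨t, ht⟩
    (by fun_prop : ContinuousOn (fun s => exp (-(lam * s)) * v s) (Icc 0 T))
  set m : ℝ := exp (-(lam * τ)) * v τ with hm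
  have hvm : ∀ s ∈ Icc 0 T, v s ≤ exp (lam * s) * m := fun s hs => by
    have hs_le : exp (-(lam * s)) * v s ≤ m := hmax hs
    rwa [exp_neg, inv_mul_le_iff₀ (exp_pos _)] at hs_le
  have hm_le : m ≤ 2 * a := by
    rcases le_total m 0 with hm0 | hm0
    · linarith
    have hvτ : v τ ≤ a + exp (lam * τ) * m * (1 / 2) := calc
      v τ ≤ a + ∫ s in 0..τ, k (τ - s) * v s := hle τ hτ
      _ ≤ a + exp (lam * τ) * m * ∫ r in 0..T, exp (-(lam * r)) * k r := by
        gcongr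
        exact integral_comp_const_sub_mul_le hk hk0 hv hm0 hvm hτ
      _ ≤ a + exp (lam * τ) * m * (1 / 2) := by gcongr
    have hexp : exp (-(lam * τ)) ≤ 1 := exp_le_one_iff.2 (by nlinarith [hτ.1])
    have hm_half : m ≤ a + m * (1 / 2) := calc
      m ≤ exp (-(lam * τ)) * (a + exp (lam * τ) * m * (1 / 2)) := by
        rw [hm]
        gcongr
      _ = exp (-(lam * τ)) * a + m * (1 / 2) := by
        rw [exp_neg]
        field_simp
      _ ≤ a + m * (1 / 2) := by
        gcongr
        exact mul_le_of_le_one_left ha hexp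
    linarith
  calc v t ≤ exp (lam * t) * m := hvm t ht
    _ ≤ exp (lam * t) * (2 * a) := by gcongr
    _ = 2 * exp (lam * t) * a := by ring

section Volterra

variable {E G : Type*} [NormedAddCommGroup E] [NormedSpace ℝ E] [NormedAddCommGroup G]
  [NormedSpace ℝ G] {T t : ℝ}

/-- `K` is an operator-valued convolution kernel on `(0, T]`, continuous in operator norm and
dominated there by the scalar function `k`, which is integrable on `(0, T]`. Both may be singular
at `0`. -/
structure HasIntegrableMajorant (K : ℝ → G →L[ℝ] E) (k : ℝ → ℝ) (T : ℝ) : Prop where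
  continuousOn : ContinuousOn K (Ioc 0 T)
  intervalIntegrable : IntervalIntegrable k volume 0 T
  norm_le : ∀ r ∈ Ioc 0 T, ‖K r‖ ≤ k r

namespace HasIntegrableMajorant

variable {K : ℝ → G →L[ℝ] E} {k : ℝ → ℝ}

lemma nonneg (hK : HasIntegrableMajorant K k T) : ∀ r ∈ Ioc 0 T, 0 ≤ k r :=
  fun r hr => (norm_nonneg _).trans (hK.norm_le r hr)

lemma integral_nonneg (hK : HasIntegrableMajorant K k T) (hT : 0 ≤ T) :
    0 ≤ ∫ r in 0..T, k r := by
  rw [intervalIntegral.integral_of_le hT]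
  exact setIntegral_nonneg measurableSet_Ioc hK.nonneg

lemma norm_apply_le (hK : HasIntegrableMajorant K k T) (ht : t ∈ Icc 0 T) {s : ℝ}
    (hs : s ∈ Ioo 0 t) {z : G} {c : ℝ} (hz : ‖z‖ ≤ c) : ‖K (t - s) z‖ ≤ k (t - s) * c := by
  have hr : t - s ∈ Ioc 0 T := ⟨sub_pos.2 hs.2, by linarith [hs.1, ht.2]⟩
  exact (K (t - s)).le_of_opNorm_le_of_le (hK.norm_le _ hr) hz

lemma intervalIntegrable_apply (hK : HasIntegrableMajorant K k T) {z : ℝ → G}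
    (hz : ContinuousOn z (Icc 0 T)) (ht : t ∈ Icc 0 T) :
    IntervalIntegrable (fun s => K (t - s) (z s)) volume 0 t := by
  obtain ⟨M, hM⟩ := isCompact_Icc.exists_bound_of_continuousOn hz
  have hsub : Ioo 0 t ⊆ Icc 0 T := fun s hs => ⟨hs.1.le, hs.2.le.trans ht.2⟩
  have hcont : ContinuousOn (fun s => K (t - s) (z s)) (Ioo 0 t) :=
    (hK.continuousOn.comp (by fun_prop) fun s hs =>
      ⟨sub_pos.2 hs.2, by linarith [hs.1, ht.2]⟩).clm_apply (hz.mono hsub)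
  have hbound := (intervalIntegrable_comp_const_sub hK.intervalIntegrable ht).mul_const M
  rw [intervalIntegrable_iff_integrableOn_Ioo_of_le ht.1] at hbound ⊢
  exact hbound.mono' (hcont.aestronglyMeasurable measurableSet_Ioo)
    (ae_restrict_of_forall_mem measurableSet_Ioo fun s hs =>
      hK.norm_apply_le ht hs (hM s (hsub hs)))

lemma norm_integral_apply_le (hK : HasIntegrableMajorant K k T) {z : ℝ → G} {c : ℝ → ℝ}
    (hc : ContinuousOn c (Icc 0 T)) (hz : ∀ s ∈ Icc 0 T, ‖z s‖ ≤ c s) (ht : t ∈ Icc 0 T) :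
    ‖∫ s in 0..t, K (t - s) (z s)‖ ≤ ∫ s in 0..t, k (t - s) * c s := by
  have hsub : uIcc 0 t ⊆ Icc 0 T := by
    rw [uIcc_of_le ht.1]
    exact Icc_subset_Icc_right ht.2
  refine intervalIntegral.norm_integral_le_of_norm_le ht.1 ?_
    ((intervalIntegrable_comp_const_sub hK.intervalIntegrable ht).mul_continuousOn (hc.mono hsub))
  filter_upwards [Measure.ae_ne volume t] with s hne hs
  have hst : s ∈ Ioo 0 t := ⟨hs.1, hs.2.lt_of_ne hne⟩
  exact hK.norm_apply_le ht hst (hz s ⟨hs.1.le, hs.2.trans ht.2⟩)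

end HasIntegrableMajorant

variable {K K' : ℝ → G →L[ℝ] E} {k d : ℝ → ℝ} {F : E → G} {L : NNReal} {f y y' : ℝ → E}

lemma norm_sub_le_of_volterra {M : ℝ} (hK' : HasIntegrableMajorant K' k T)
    (hsub : HasIntegrableMajorant (K' - K) d T) (hF : LipschitzWith L F)
    (hy : ContinuousOn y (Icc 0 T)) (hy' : ContinuousOn y' (Icc 0 T))
    (hM : ∀ s ∈ Icc 0 T, ‖F (y s)‖ ≤ M) (ht : t ∈ Icc 0 T)
    (hy_eq : y t = (∫ s in 0..t, K (t - s) (F (y s))) + f t)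
    (hy'_eq : y' t = (∫ s in 0..t, K' (t - s) (F (y' s))) + f t) :
    ‖y' t - y t‖ ≤ (∫ r in 0..T, d r) * M + ∫ s in 0..t, L * k (t - s) * ‖y' s - y s‖ := by
  have hFy : ContinuousOn (fun s => F (y s)) (Icc 0 T) := hF.continuous.comp_continuousOn hy
  have hFy' : ContinuousOn (fun s => F (y' s)) (Icc 0 T) := hF.continuous.comp_continuousOn hy'
  have hsplit : y' t - y t = (∫ s in 0..t, (K' - K) (t - s) (F (y s))) +
      ∫ s in 0..t, K' (t - s) (F (y' s) - F (y s)) := by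
    have hi' := hK'.intervalIntegrable_apply hFy' ht
    have hiy := hK'.intervalIntegrable_apply hFy ht
    have hid := hsub.intervalIntegrable_apply hFy ht
    have hK_eq : ∫ s in 0..t, K (t - s) (F (y s)) = (∫ s in 0..t, K' (t - s) (F (y s))) -
        ∫ s in 0..t, (K' - K) (t - s) (F (y s)) := by
      rw [← intervalIntegral.integral_sub hiy hid]
      simp
    simp only [map_sub]
    rw [intervalIntegral.integral_sub hi' hiy, hy_eq, hy'_eq, hK_eq]
    abel
  have hkernel : ‖∫ s in 0..t, (K' - K) (t - s) (F (y s))‖ ≤ (∫ r in 0..T, d r) * M := by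
    have hM0 : 0 ≤ M := (norm_nonneg _).trans (hM t ht)
    refine (hsub.norm_integral_apply_le continuousOn_const hM ht).trans ?_
    rw [intervalIntegral.integral_mul_const]
    gcongr
    exact integral_comp_const_sub_le hsub.intervalIntegrable hsub.nonneg ht
  have hlip : ‖∫ s in 0..t, K' (t - s) (F (y' s) - F (y s))‖ ≤
      ∫ s in 0..t, L * k (t - s) * ‖y' s - y s‖ := by
    refine (hK'.norm_integral_apply_le (c := fun s => L * ‖y' s - y s‖) (by fun_prop)
      (fun s _ => hF.norm_sub_le _ _) ht).trans_eq ?_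
    congr 1 with s
    ring
  rw [hsplit]
  exact (norm_add_le _ _).trans (add_le_add hkernel hlip)

theorem tendstoUniformlyOn_of_volterra {ι : Type*} {l : Filter ι} {Kn : ι → ℝ → G →L[ℝ] E}
    {dn : ι → ℝ → ℝ} {yn : ι → ℝ → E} (hT : 0 ≤ T)
    (hKn : ∀ n, HasIntegrableMajorant (Kn n) k T)
    (hsub : ∀ n, HasIntegrableMajorant (Kn n - K) (dn n) T)
    (hdn : Tendsto (fun n => ∫ r in 0..T, dn n r) l (𝓝 0)) (hF : LipschitzWith L F)
    (hy : ContinuousOn y (Icc 0 T)) (hyn : ∀ n, ContinuousOn (yn n) (Icc 0 T))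
    (hy_eq : ∀ t ∈ Icc 0 T, y t = (∫ s in 0..t, K (t - s) (F (y s))) + f t)
    (hyn_eq : ∀ n, ∀ t ∈ Icc 0 T, yn n t = (∫ s in 0..t, Kn n (t - s) (F (yn n s))) + f t) :
    TendstoUniformlyOn yn y l (Icc 0 T) := by
  rcases isEmpty_or_nonempty ι with _ | ⟨⟨n₀⟩⟩
  · exact fun _ _ => .of_forall isEmptyElim
  obtain ⟨M, hM⟩ := isCompact_Icc.exists_bound_of_continuousOn
    (hF.continuous.comp_continuousOn hy)
  have hM0 : 0 ≤ M := (norm_nonneg _).trans (hM 0 ⟨le_rfl, hT⟩)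
  have hLk : IntervalIntegrable (fun r => L * k r) volume 0 T :=
    (hKn n₀).intervalIntegrable.const_mul _
  obtain ⟨lam, hmass, hlam⟩ := (((tendsto_integral_exp_neg_mul_mul_atTop hT hLk).eventually_le_const
    one_half_pos).and (eventually_ge_atTop 0)).exists
  refine tendstoUniformlyOn_of_norm_sub_le
    (b := fun n => 2 * exp (lam * T) * ((∫ r in 0..T, dn n r) * M))
    (by simpa using (hdn.mul_const M).const_mul (2 * exp (lam * T))) fun n t ht => ?_
  have hdn0 : 0 ≤ (∫ r in 0..T, dn n r) * M := mul_nonneg ((hsub n).integral_nonneg hT) hM0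
  have hgronwall := le_two_mul_exp_mul_of_le_add_integral hlam hLk
    (fun r hr => mul_nonneg L.2 ((hKn n).nonneg r hr)) hmass hdn0 ((hyn n).sub hy).norm
    (fun τ hτ => norm_sub_le_of_volterra (hKn n) (hsub n) hF hy (hyn n) hM hτ (hy_eq τ hτ)
      (hyn_eq n τ hτ)) t ht
  refine hgronwall.trans ?_
  gcongr
  exact ht.2

end Volterra

/-! ### The kernel of `D_ξ e^{tA}` -/

lemma rpow_mul_exp_neg_le_one {x a : ℝ} (hx : 0 ≤ x) (ha : 0 ≤ a) (ha1 : a ≤ 1) :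
    x ^ a * exp (-x) ≤ 1 := by
  have hrpow : x ^ a ≤ exp x := calc
    x ^ a ≤ exp x ^ a := by
      gcongr
      linarith [add_one_le_exp x]
    _ = exp (x * a) := (exp_mul x a).symm
    _ ≤ exp x := exp_le_exp.2 (mul_le_of_le_one_right hx ha1)
  calc x ^ a * exp (-x) ≤ exp x * exp (-x) := by gcongr
    _ = 1 := by rw [← exp_add, add_neg_cancel, exp_zero]

lemma abs_mul_exp_neg_le_rpow_mul_rpow (κ : ℝ) {t a : ℝ} (ht : 0 < t) (ha : 0 ≤ a)
    (ha1 : a ≤ 1) :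
    |κ| * exp (-(1 + κ ^ 2) * t) ≤ |κ| ^ (1 - 2 * a) * t ^ (-a) := by
  rcases eq_or_ne κ 0 with rfl | hκ
  · simp only [abs_zero, zero_mul]
    positivity
  have hκ0 : 0 < |κ| := abs_pos.2 hκ
  have hpow : |κ| = |κ| ^ (1 - 2 * a) * t ^ (-a) * (κ ^ 2 * t) ^ a := by
    rw [mul_rpow (sq_nonneg κ) ht.le, ← sq_abs κ, ← rpow_natCast, ← rpow_mul hκ0.le,
      mul_mul_mul_comm, ← rpow_add hκ0, ← rpow_add ht]
    norm_num
  calc |κ| * exp (-(1 + κ ^ 2) * t)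
      ≤ |κ| * exp (-(κ ^ 2 * t)) := by
        gcongr
        linarith
    _ = |κ| ^ (1 - 2 * a) * t ^ (-a) * ((κ ^ 2 * t) ^ a * exp (-(κ ^ 2 * t))) := by
        nth_rewrite 1 [hpow]
        ring
    _ ≤ |κ| ^ (1 - 2 * a) * t ^ (-a) :=
        mul_le_of_le_one_right (by positivity)
          (rpow_mul_exp_neg_le_one (by positivity) ha ha1)

/-- `K t` is the operator `D_ξ e^{tA}` for every `t > 0`, in the trigonometric basis:
`D_ξ e_{-k} = -k e_k`. -/
def IsDerivHeatKernel (K : ℝ → H →L[ℝ] H) : Prop :=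
  ∀ t : ℝ, 0 < t → ∀ (x : H) (k : ℤ),
    (K t x) k = -(k : ℝ) * exp (-(1 + (k : ℝ) ^ 2) * t) * x (-k)

/-- `P n` is the Galerkin projection onto the modes of frequency at most `n`. -/
def IsFourierTruncation (P : ℕ → H →L[ℝ] H) : Prop :=
  ∀ (n : ℕ) (x : H) (k : ℤ), (P n x) k = if |k| ≤ (n : ℤ) then x k else 0

namespace IsDerivHeatKernel

variable {K : ℝ → H →L[ℝ] H} {P : ℕ → H →L[ℝ] H} {t : ℝ}

lemma abs_apply_le (hK : IsDerivHeatKernel K) (ht : 0 < t) {a : ℝ} (ha : 0 ≤ a) (ha1 : a ≤ 1)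
    (x : H) (k : ℤ) : |K t x k| ≤ |(k : ℝ)| ^ (1 - 2 * a) * t ^ (-a) * |x (-k)| := by
  rw [hK t ht, abs_mul, abs_mul, abs_neg, abs_exp]
  exact mul_le_mul_of_nonneg_right (abs_mul_exp_neg_le_rpow_mul_rpow k ht ha ha1) (abs_nonneg _)

lemma opNorm_comp_truncation_le (hK : IsDerivHeatKernel K) (hP : IsFourierTruncation P) (n : ℕ)
    (ht : 0 < t) : ‖K t ∘L P n‖ ≤ t ^ (-(1 / 2) : ℝ) := by
  refine lp_opNorm_le_of_forall_norm_apply_le (by norm_num) neg_injective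
    (by positivity) fun x k => ?_
  have htrunc : |P n x (-k)| ≤ |x (-k)| := by
    rw [hP]
    split_ifs <;> simp
  calc |K t (P n x) k| ≤ t ^ (-(1 / 2) : ℝ) * |P n x (-k)| := by
        simpa using hK.abs_apply_le ht one_half_pos.le one_half_lt_one.le (P n x) k
    _ ≤ t ^ (-(1 / 2) : ℝ) * |x (-k)| := by gcongr

lemma opNorm_comp_truncation_sub_le (hK : IsDerivHeatKernel K) (hP : IsFourierTruncation P)
    (n : ℕ) (ht : 0 < t) {a : ℝ} (ha : 1 / 2 ≤ a) (ha1 : a ≤ 1) :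
    ‖K t ∘L P n - K t‖ ≤ ((n : ℝ) + 1) ^ (1 - 2 * a) * t ^ (-a) := by
  refine lp_opNorm_le_of_forall_norm_apply_le (by norm_num) neg_injective
    (by positivity) fun x k => ?_
  have happly : (K t ∘L P n - K t) x = K t (P n x - x) := by simp
  have hbound := hK.abs_apply_le ht (one_half_pos.le.trans ha) ha1 (P n x - x) k
  rw [lp.coeFn_sub, Pi.sub_apply, hP, abs_neg] at hbound
  rw [happly]
  split_ifs at hbound with hkn
  · refine hbound.trans ?_
    rw [sub_self, abs_zero, mul_zero]
    positivity
  · have hk : (n : ℝ) + 1 ≤ |(k : ℝ)| := by exact_mod_cast not_le.1 hkn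
    rw [zero_sub, abs_neg] at hbound
    refine hbound.trans ?_
    gcongr ?_ * _ * _
    exact rpow_le_rpow_of_nonpos (by positivity) hk (by linarith)

lemma comp_truncation_eq_sum (hK : IsDerivHeatKernel K) (hP : IsFourierTruncation P) (n : ℕ)
    (ht : 0 < t) :
    K t ∘L P n = ∑ k ∈ Finset.Icc (-n : ℤ) n, (-(k : ℝ) * exp (-(1 + (k : ℝ) ^ 2) * t)) •
      (lp.singleContinuousLinearMap ℝ (fun _ : ℤ => ℝ) 2 k ∘L
        lp.evalCLM ℝ (fun _ : ℤ => ℝ) 2 (-k)) := by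
  ext x j
  simp only [ContinuousLinearMap.comp_apply, _root_.sum_apply,
    _root_.smul_apply, lp.singleContinuousLinearMap_apply, lp.coeFn_sum,
    Finset.sum_apply, lp.coeFn_smul, Pi.smul_apply, lp.coeFn_single, Pi.single_apply, smul_ite,
    smul_zero, Finset.sum_ite_eq, Finset.mem_Icc, hK t ht, hP n, abs_neg, ← abs_le]
  simp [lp.evalCLM]

lemma continuousOn_comp_truncation (hK : IsDerivHeatKernel K) (hP : IsFourierTruncation P)
    (n : ℕ) : ContinuousOn (fun t => K t ∘L P n) (Ioi 0) :=
  ContinuousOn.congr (by fun_prop) fun _ ht => hK.comp_truncation_eq_sum hP n ht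

lemma continuousOn (hK : IsDerivHeatKernel K) (hP : IsFourierTruncation P) :
    ContinuousOn K (Ioi 0) := by
  intro t ht
  have ht2 : 0 < t / 2 := half_pos ht
  have hunif : TendstoUniformlyOn (fun n r => K r ∘L P n) K atTop (Ioi (t / 2)) := by
    refine tendstoUniformlyOn_of_norm_sub_le
      (b := fun n : ℕ => ((n : ℝ) + 1) ^ (-(1 / 2) : ℝ) * (t / 2) ^ (-(3 / 4) : ℝ))
      (by simpa only [zero_mul] using
        (tendsto_natCast_add_one_rpow_neg one_half_pos).mul_const _) fun n r hr => ?_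
    calc ‖K r ∘L P n - K r‖ ≤ ((n : ℝ) + 1) ^ (-(1 / 2) : ℝ) * r ^ (-(3 / 4) : ℝ) := by
          rw [show (-(1 / 2) : ℝ) = 1 - 2 * (3 / 4) by norm_num]
          exact hK.opNorm_comp_truncation_sub_le hP n (ht2.trans hr) (by norm_num) (by norm_num)
      _ ≤ ((n : ℝ) + 1) ^ (-(1 / 2) : ℝ) * (t / 2) ^ (-(3 / 4) : ℝ) := by
          gcongr ?_ * ?_
          exact rpow_le_rpow_of_nonpos ht2 (le_of_lt hr) (by norm_num)
  have hcont : ContinuousOn K (Ioi (t / 2)) := hunif.continuousOn <| .of_forall fun n =>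
    (hK.continuousOn_comp_truncation hP n).mono (Ioi_subset_Ioi ht2.le)
  exact (hcont.continuousAt (Ioi_mem_nhds (half_lt_self ht))).continuousWithinAt

lemma hasIntegrableMajorant_comp_truncation (hK : IsDerivHeatKernel K)
    (hP : IsFourierTruncation P) (n : ℕ) (T : ℝ) :
    HasIntegrableMajorant (fun t => K t ∘L P n) (fun t => t ^ (-(1 / 2) : ℝ)) T where
  continuousOn := (hK.continuousOn_comp_truncation hP n).mono Ioc_subset_Ioi_self
  intervalIntegrable := intervalIntegral.intervalIntegrable_rpow' (by norm_num)
  norm_le _ hr := hK.opNorm_comp_truncation_le hP n hr.1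

lemma hasIntegrableMajorant_comp_truncation_sub (hK : IsDerivHeatKernel K)
    (hP : IsFourierTruncation P) (n : ℕ) (T : ℝ) :
    HasIntegrableMajorant ((fun t => K t ∘L P n) - K)
      (fun t => ((n : ℝ) + 1) ^ (-(1 / 2) : ℝ) * t ^ (-(3 / 4) : ℝ)) T where
  continuousOn := ((hK.continuousOn_comp_truncation hP n).sub (hK.continuousOn hP)).mono
    Ioc_subset_Ioi_self
  intervalIntegrable := (intervalIntegral.intervalIntegrable_rpow' (by norm_num)).const_mul _
  norm_le r hr := by
    rw [show (-(1 / 2) : ℝ) = 1 - 2 * (3 / 4) by norm_num]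
    exact hK.opNorm_comp_truncation_sub_le hP n hr.1 (by norm_num) (by norm_num)

end IsDerivHeatKernel

/-- Pathwise approximation theorem: with `S`, `K`, the projections `P_n`, a Lipschitz
`F : H → H`, a continuous `g` and the mild solutions `y`, `y_n` of the equation and of its
Galerkin-type approximations `K_n(t) = K(t) ∘ P_n`, one has
`sup_{t∈[0,T]} ‖y_n(t) − y(t)‖ → 0` as `n → ∞`. -/
theorem stmt_11 (S K : ℝ → H →L[ℝ] H)
    (hS : ∀ t : ℝ, 0 ≤ t → ∀ (x : H) (k : ℤ),
      (S t x) k = Real.exp (-(1 + (k : ℝ) ^ 2) * t) * x k)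
    (hK : ∀ t : ℝ, 0 < t → ∀ (x : H) (k : ℤ),
      (K t x) k = -(k : ℝ) * Real.exp (-(1 + (k : ℝ) ^ 2) * t) * x (-k))
    (P : ℕ → H →L[ℝ] H)
    (hP : ∀ (n : ℕ) (x : H) (k : ℤ), (P n x) k = if |k| ≤ (n : ℤ) then x k else 0)
    (F : H → H) (hF : ∃ L : NNReal, LipschitzWith L F)
    (T : ℝ) (hT : 0 < T) (x : H)
    (g : ℝ → H) (hg : ContinuousOn g (Set.Icc 0 T))
    (y : ℝ → H) (yn : ℕ → ℝ → H)
    (hy_cont : ContinuousOn y (Set.Icc 0 T))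
    (hyn_cont : ∀ n : ℕ, ContinuousOn (yn n) (Set.Icc 0 T))
    (hy_sol : ∀ t ∈ Set.Icc (0 : ℝ) T,
      y t = S t x + (∫ s in (0 : ℝ)..t, K (t - s) (F (y s))) + g t)
    (hyn_sol : ∀ (n : ℕ), ∀ t ∈ Set.Icc (0 : ℝ) T,
      yn n t = S t x + (∫ s in (0 : ℝ)..t, ((K (t - s)).comp (P n)) (F (yn n s))) + g t) :
    TendstoUniformlyOn (fun n t => yn n t) y atTop (Set.Icc 0 T) := by
  obtain ⟨L, hL⟩ := hF
  have hK' : IsDerivHeatKernel K := hK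
  have hdn : Tendsto (fun n : ℕ => ∫ r in 0..T, ((n : ℝ) + 1) ^ (-(1 / 2) : ℝ) *
      r ^ (-(3 / 4) : ℝ)) atTop (𝓝 0) := by
    simpa only [intervalIntegral.integral_const_mul, zero_mul] using
      (tendsto_natCast_add_one_rpow_neg one_half_pos).mul_const (∫ r in 0..T, r ^ (-(3 / 4) : ℝ))
  refine tendstoUniformlyOn_of_volterra (f := fun t => S t x + g t) hT.le
    (fun n => hK'.hasIntegrableMajorant_comp_truncation hP n T)
    (fun n => hK'.hasIntegrableMajorant_comp_truncation_sub hP n T) hdn hL hy_cont hyn_cont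
    (fun t ht => ?_) (fun n t ht => ?_)
  · rw [hy_sol t ht]
    abel
  · rw [hyn_sol n t ht]
    abel
end
end

section
/- Let T > 0. For every continuous function ψ : [0,T] → H with ψ(0) = 0 and every ε > 0 there exists a strongly measurable function u : [0,T] → H with ∫₀ᵀ ‖u(t)‖² dt < ∞ such that sup_{t∈[0,T]} ‖ ∫₀ᵗ S(t−s) u(s) ds − ψ(t) ‖ ≤ ε. In other words, the linear map u ↦ σ_u, σ_u(t) = ∫₀ᵗ S(t−s)u(s)ds, from L²([0,T];H) to C₀([0,T];H) = {φ ∈ C([0,T];H) : φ(0) = 0} has dense range. -/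
open Real MeasureTheory

noncomputable section

/-! If `A` generates `S`, `x` lies in the domain of `A` and `q : ℝ → ℝ` is `C¹` with `q 0 = 0`,
then the control `u = q' x - q A x` steers the system exactly along `t ↦ q t x`, because
`d/ds (q s S (t - s) x) = S (t - s) (u s)`. As the equation is linear, every finite sum of such
paths is a trajectory. When the domain is dense, these sums approximate any continuous path issuing
from `0`: take a Bernstein approximation and move its coefficients into the domain. The operators
of the theorem are diagonal, so all finitely supported sequences lie in the domain. -/

open Set Polynomial
open scoped unitInterval

section Generator

variable {E : Type*} [NormedAddCommGroup E] [NormedSpace ℝ E] {S : ℝ → E →L[ℝ] E}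

/-- `x` lies in the domain of the infinitesimal generator `A` of `S`, and `A x = y`. For a strongly
continuous semigroup, `S t y` is the derivative of the orbit of `x` at every `t ≥ 0` as soon as it
is so at `0`; stating this for all `t` makes the notion usable without the semigroup law. -/
structure HasGeneratorAt (S : ℝ → E →L[ℝ] E) (x y : E) : Prop where
  apply_zero : S 0 x = x
  hasDerivWithinAt : ∀ t, 0 ≤ t → HasDerivWithinAt (fun r => S r x) (S t y) (Ici 0) t
  continuousOn : ContinuousOn (fun r => S r y) (Ici 0)

namespace HasGeneratorAt

variable {x y x' y' : E}

lemma zero : HasGeneratorAt S 0 0 where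
  apply_zero := map_zero _
  hasDerivWithinAt t _ := by simpa using hasDerivWithinAt_const t (Ici 0) (0 : E)
  continuousOn := by simpa using continuousOn_const

lemma add (h : HasGeneratorAt S x y) (h' : HasGeneratorAt S x' y') :
    HasGeneratorAt S (x + x') (y + y') where
  apply_zero := by rw [map_add, h.apply_zero, h'.apply_zero]
  hasDerivWithinAt t ht := by
    simpa using (h.hasDerivWithinAt t ht).fun_add (h'.hasDerivWithinAt t ht)
  continuousOn := by simpa using h.continuousOn.fun_add h'.continuousOn

lemma smul (c : ℝ) (h : HasGeneratorAt S x y) : HasGeneratorAt S (c • x) (c • y) where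
  apply_zero := by rw [map_smul, h.apply_zero]
  hasDerivWithinAt t ht := by simpa using (h.hasDerivWithinAt t ht).fun_const_smul c
  continuousOn := by simpa using h.continuousOn.fun_const_smul c

lemma of_eq_exp_smul {c : ℝ} (h : ∀ t, 0 ≤ t → S t x = exp (c * t) • x) :
    HasGeneratorAt S x (c • x) where
  apply_zero := by simpa using h 0 le_rfl
  hasDerivWithinAt t ht := by
    have hexp : HasDerivAt (fun r => exp (c * r)) (exp (c * t) * c) t := by
      simpa using ((hasDerivAt_id t).const_mul c).exp
    rw [map_smul, h t ht, smul_smul, mul_comm]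
    exact (hexp.smul_const x).hasDerivWithinAt.congr h (h t ht)
  continuousOn := by
    have hcont : Continuous fun r : ℝ => c • exp (c * r) • x := by fun_prop
    exact hcont.continuousOn.congr fun r hr => by rw [map_smul, h r hr]

lemma hasDerivWithinAt_const_sub (h : HasGeneratorAt S x y) {s t : ℝ} (hst : s ≤ t) :
    HasDerivWithinAt (fun r => S (t - r) x) (-S (t - s) y) (Iic t) s := by
  have hsub : HasDerivWithinAt (fun r => t - r) (-1) (Iic t) s :=
    ((hasDerivAt_id s).const_sub t).hasDerivWithinAt
  have hmaps : MapsTo (fun r => t - r) (Iic t) (Ici 0) := fun _ hr => sub_nonneg.2 (mem_Iic.1 hr)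
  simpa [Function.comp_def] using
    (h.hasDerivWithinAt (t - s) (sub_nonneg.2 hst)).scomp s hsub hmaps

lemma continuousOn_const_sub (h : HasGeneratorAt S x y) (t : ℝ) :
    ContinuousOn (fun s => S (t - s) y) (Iic t) :=
  h.continuousOn.comp (by fun_prop) fun _ hs => sub_nonneg.2 (mem_Iic.1 hs)

end HasGeneratorAt

/-- The domain of the infinitesimal generator of `S`, in the sense of `HasGeneratorAt`. -/
def generatorDomain (S : ℝ → E →L[ℝ] E) : Submodule ℝ E where
  carrier := {x | ∃ y, HasGeneratorAt S x y}
  add_mem' := fun ⟨_, h⟩ ⟨_, h'⟩ => ⟨_, h.add h'⟩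
  zero_mem' := ⟨0, .zero⟩
  smul_mem' c _ := fun ⟨_, h⟩ => ⟨_, h.smul c⟩

/-- `φ` is the mild solution on `[0, ∞)` of `φ' = A φ + u`, `φ 0 = 0`, where `A` generates `S`.
Integrability is part of the notion, as the integral is `0` by convention without it. -/
def IsMildSolution (S : ℝ → E →L[ℝ] E) (u φ : ℝ → E) : Prop :=
  ∀ t, 0 ≤ t → IntervalIntegrable (fun s => S (t - s) (u s)) volume 0 t ∧
    ∫ s in (0 : ℝ)..t, S (t - s) (u s) = φ t

lemma IsMildSolution.sum {ι : Type*} {A : Finset ι} {u φ : ι → ℝ → E}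
    (h : ∀ i ∈ A, IsMildSolution S (u i) (φ i)) :
    IsMildSolution S (fun s => ∑ i ∈ A, u i s) (fun t => ∑ i ∈ A, φ i t) := by
  intro t ht
  simp only [map_sum]
  have hint := fun i hi => (h i hi t ht).1
  refine ⟨by simpa only [Finset.sum_fn] using IntervalIntegrable.sum A hint, ?_⟩
  rw [intervalIntegral.integral_finsetSum hint]
  exact Finset.sum_congr rfl fun i hi => (h i hi t ht).2

lemma HasGeneratorAt.isMildSolution [CompleteSpace E] {x y : E} (h : HasGeneratorAt S x y)
    {q q' : ℝ → ℝ} (hq : ∀ t, HasDerivAt q (q' t) t) (hq' : Continuous q') (hq0 : q 0 = 0) :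
    IsMildSolution S (fun s => q' s • x - q s • y) (fun t => q t • x) := by
  intro t ht
  have hderiv : ∀ s ∈ Iic t, HasDerivWithinAt (fun r => q r • S (t - r) x)
      (S (t - s) (q' s • x - q s • y)) (Iic t) s := fun s hs => by
    refine ((hq s).hasDerivWithinAt.smul (h.hasDerivWithinAt_const_sub hs)).congr_deriv ?_
    rw [map_sub, map_smul, map_smul, smul_neg, neg_add_eq_sub]
  have hpath : ContinuousOn (fun s => S (t - s) x) (Iic t) := fun s hs =>
    (h.hasDerivWithinAt_const_sub hs).continuousWithinAt
  have hqcont : Continuous q := continuous_iff_continuousAt.2 fun s => (hq s).continuousAt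
  have hint : IntervalIntegrable (fun s => S (t - s) (q' s • x - q s • y)) volume 0 t := by
    simp only [map_sub, map_smul]
    exact (((hq'.continuousOn.smul hpath).sub
      (hqcont.continuousOn.smul (h.continuousOn_const_sub t))).mono
        Icc_subset_Iic_self).intervalIntegrable_of_Icc ht
  refine ⟨hint, ?_⟩
  rw [intervalIntegral.integral_eq_sub_of_hasDerivAt_of_le ht
    (fun s hs => ((hderiv s hs.2).mono Icc_subset_Iic_self).continuousWithinAt)
    (fun s hs => (hderiv s hs.2.le).hasDerivAt (Iic_mem_nhds hs.2)) hint]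
  simp [hq0, h.apply_zero]

end Generator

section Approximation

variable {E : Type*} [NormedAddCommGroup E] [NormedSpace ℝ E] {D : Set E}

lemma sum_bernstein_succ_le_one (n : ℕ) (x : I) :
    ∑ k : Fin n, bernstein n (k + 1) x ≤ 1 := by
  have hsum := bernstein.probability n x
  simp only [Fin.sum_univ_succ, Fin.val_succ] at hsum
  linarith [bernstein_nonneg (n := n) (ν := (0 : Fin (n + 1))) (x := x)]

lemma bernsteinApproximation_apply_of_map_zero {f : C(I, E)} (hf : f 0 = 0) (n : ℕ) (x : I) :
    bernsteinApproximation n f x =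
      ∑ k : Fin n, bernstein n (k + 1) x • f (bernstein.z k.succ) := by
  simp [bernsteinApproximation.apply, Fin.sum_univ_succ, hf]

lemma exists_sum_polynomial_smul_close_of_unitInterval (hD : Dense D) {f : C(I, E)}
    (hf : f 0 = 0) {ε : ℝ} (hε : 0 < ε) :
    ∃ (n : ℕ) (q : Fin n → ℝ[X]) (d : Fin n → E), (∀ k, (q k).eval 0 = 0) ∧ (∀ k, d k ∈ D) ∧
      ∀ x : I, ‖∑ k, (q k).eval (x : ℝ) • d k - f x‖ ≤ ε := by
  obtain ⟨n, hn⟩ :=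
    ((bernsteinApproximation_uniform f).eventually (Metric.ball_mem_nhds f (half_pos hε))).exists
  choose d hdD hd using fun k : Fin n => hD.exists_dist_lt (f (bernstein.z k.succ)) (half_pos hε)
  refine ⟨n, fun k => bernsteinPolynomial ℝ n (k + 1), d,
    fun k => by simp [bernsteinPolynomial.eval_at_0], hdD, fun x => ?_⟩
  have hcoeff : ‖∑ k : Fin n, bernstein n (k + 1) x • d k - bernsteinApproximation n f x‖
      ≤ ε / 2 := by
    rw [bernsteinApproximation_apply_of_map_zero hf, ← Finset.sum_sub_distrib]
    calc ‖∑ k : Fin n, (bernstein n (k + 1) x • d k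
            - bernstein n (k + 1) x • f (bernstein.z k.succ))‖
        ≤ ∑ k : Fin n, bernstein n (k + 1) x * (ε / 2) := norm_sum_le_of_le _ fun k _ => by
          rw [← smul_sub, norm_smul, Real.norm_of_nonneg bernstein_nonneg, ← dist_eq_norm']
          exact mul_le_mul_of_nonneg_left (hd k).le bernstein_nonneg
      _ ≤ ε / 2 := by
          rw [← Finset.sum_mul]
          exact mul_le_of_le_one_left (half_pos hε).le (sum_bernstein_succ_le_one n x)
  have happrox : ‖bernsteinApproximation n f x - f x‖ ≤ ε / 2 := by
    rw [← dist_eq_norm]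
    exact (ContinuousMap.dist_apply_le_dist x).trans hn.le
  exact (norm_sub_le_norm_sub_add_norm_sub _ (bernsteinApproximation n f x) _).trans
    ((add_le_add hcoeff happrox).trans_eq (add_halves ε))

lemma exists_sum_polynomial_smul_close (hD : Dense D) {T : ℝ} (hT : 0 < T) {f : ℝ → E}
    (hf : ContinuousOn f (Icc 0 T)) (hf0 : f 0 = 0) {ε : ℝ} (hε : 0 < ε) :
    ∃ (n : ℕ) (q : Fin n → ℝ[X]) (d : Fin n → E), (∀ k, (q k).eval 0 = 0) ∧ (∀ k, d k ∈ D) ∧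
      ∀ t ∈ Icc 0 T, ‖∑ k, (q k).eval t • d k - f t‖ ≤ ε := by
  have hmaps : ∀ x : I, T * x ∈ Icc 0 T := fun x =>
    ⟨mul_nonneg hT.le x.2.1, mul_le_of_le_one_right hT.le x.2.2⟩
  let g : C(I, E) := ⟨fun x => f (T * x), hf.comp_continuous (by fun_prop) hmaps⟩
  have hg0 : g 0 = 0 := by simp [g, hf0]
  obtain ⟨n, q, d, hq0, hd, hclose⟩ :=
    exists_sum_polynomial_smul_close_of_unitInterval hD hg0 hε
  refine ⟨n, fun k => (q k).comp (C T⁻¹ * X), d, fun k => by simp [hq0], hd, fun t ht => ?_⟩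
  simpa [g, div_eq_inv_mul, mul_inv_cancel_left₀ hT.ne'] using
    hclose ⟨t / T, div_nonneg ht.1 hT.le, (div_le_one hT).2 ht.2⟩

end Approximation

lemma dense_generatorDomain_of_diagonal {ι : Type*} {E : ι → Type*}
    [∀ i, NormedAddCommGroup (E i)] [∀ i, NormedSpace ℝ (E i)] {p : ENNReal} [Fact (1 ≤ p)]
    (hp : p ≠ ⊤) {S : ℝ → lp E p →L[ℝ] lp E p} {c : ι → ℝ}
    (hS : ∀ t, 0 ≤ t → ∀ (x : lp E p) (i : ι), S t x i = exp (c i * t) • x i) :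
    Dense (generatorDomain S : Set (lp E p)) := by
  classical
  have hsingle (i : ι) (a : E i) : lp.single p i a ∈ generatorDomain S := by
    refine ⟨_, .of_eq_exp_smul (c := c i) fun t ht => lp.ext (funext fun j => ?_)⟩
    rw [hS t ht]
    obtain rfl | hij := eq_or_ne j i
    · simp
    · simp [hij]
  exact fun x => mem_closure_of_tendsto (lp.hasSum_single hp x) <|
    .of_forall fun A => sum_mem fun i _ => hsingle i (x i)

theorem stmt_12_general {E : Type*} [NormedAddCommGroup E] [NormedSpace ℝ E] [CompleteSpace E]
    {S : ℝ → E →L[ℝ] E} (hS : Dense (generatorDomain S : Set E)) {T : ℝ} (hT : 0 < T)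
    {ψ : ℝ → E} (hψ : ContinuousOn ψ (Icc 0 T)) (hψ0 : ψ 0 = 0) {ε : ℝ} (hε : 0 < ε) :
    ∃ u : ℝ → E, Continuous u ∧
      ∀ t ∈ Icc 0 T, ‖(∫ s in (0 : ℝ)..t, S (t - s) (u s)) - ψ t‖ ≤ ε := by
  obtain ⟨n, q, x, hq0, hx, hclose⟩ := exists_sum_polynomial_smul_close hS hT hψ hψ0 hε
  choose y hy using hx
  let u : ℝ → E := fun s => ∑ k, ((q k).derivative.eval s • x k - (q k).eval s • y k)
  have hsol : IsMildSolution S u fun t => ∑ k, (q k).eval t • x k :=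
    .sum fun k _ => (hy k).isMildSolution (q k).hasDerivAt (q k).derivative.continuous (hq0 k)
  refine ⟨u, by fun_prop, fun t ht => ?_⟩
  rw [(hsol t ht.1).2]
  exact hclose t ht

/-- Dense range of the map `u ↦ σ_u`, `σ_u(t) = ∫₀ᵗ S(t−s)u(s)ds`, from `L²([0,T];H)` into
`C₀([0,T];H)`: for every continuous `ψ : [0,T] → H` with `ψ(0) = 0` and every `ε > 0` there
is a strongly measurable and square-integrable `u : [0,T] → H` with
`sup_{t∈[0,T]} ‖∫₀ᵗ S(t−s)u(s)ds − ψ(t)‖ ≤ ε`. -/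
theorem stmt_12 (S : ℝ → H →L[ℝ] H)
    (hS : ∀ t : ℝ, 0 ≤ t → ∀ (x : H) (k : ℤ),
      (S t x) k = Real.exp (-(1 + (k : ℝ) ^ 2) * t) * x k)
    (T : ℝ) (hT : 0 < T)
    (ψ : ℝ → H) (hψ : ContinuousOn ψ (Set.Icc 0 T)) (hψ0 : ψ 0 = 0)
    (ε : ℝ) (hε : 0 < ε) :
    ∃ u : ℝ → H,
      MeasureTheory.StronglyMeasurable u ∧
      IntervalIntegrable (fun t => ‖u t‖ ^ 2) MeasureTheory.volume 0 T ∧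
      ∀ t ∈ Set.Icc (0 : ℝ) T,
        ‖(∫ s in (0 : ℝ)..t, S (t - s) (u s)) - ψ t‖ ≤ ε := by
  obtain ⟨u, hu, hclose⟩ := stmt_12_general
    (dense_generatorDomain_of_diagonal ENNReal.ofNat_ne_top hS) hT hψ hψ0 hε
  exact ⟨u, hu.stronglyMeasurable, (hu.norm.pow 2).intervalIntegrable 0 T, hclose⟩
end
end

section
/- Let F : ℝ → ℝ be continuously differentiable with M = sup_{r∈ℝ} |F'(r)| < ∞, let x : ℝ → ℝ be continuously differentiable with x(0) = x(2π), and let y : [0,2π] → ℝ be measurable with ∫₀^{2π} y(ξ)² dξ < ∞. Then | ∫₀^{2π} F(x(ξ) + y(ξ)) x'(ξ) dξ | ≤ M (∫₀^{2π} y(ξ)² dξ)^{1/2} (∫₀^{2π} x'(ξ)² dξ)^{1/2}. -/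
open Real MeasureTheory

/-!
If `x a = x b`, the change of variables `u = x ξ` turns `∫ F(x) x'` into an integral over a
degenerate interval, so `F ∘ x` is orthogonal to `x'`. Hence `F(x + y)` may be replaced by
`F(x + y) - F(x)`, which is pointwise at most `K |y|`, and Hölder's inequality concludes.
-/

open Set
open scoped NNReal ENNReal Interval

variable {E : Type*} [NormedAddCommGroup E]

section Measure

variable {α V : Type*} {m : MeasurableSpace α} {μ : Measure α} {p q : ℝ≥0∞}
  [NormedAddCommGroup V]

theorem lpNorm_two_eq_sqrt_integral_sq {f : α → ℝ} (hf : AEStronglyMeasurable f μ) :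
    lpNorm f 2 μ = √(∫ t, f t ^ 2 ∂μ) := by
  rw [lpNorm_eq_integral_norm_rpow_toReal two_ne_zero ENNReal.ofNat_ne_top hf]
  simp [sqrt_eq_rpow]

theorem memLp_comp_sub_comp_of_lipschitzWith {K : ℝ≥0} {F : V → E} (hF : LipschitzWith K F)
    {u w : α → V} (hu : AEStronglyMeasurable u μ) (hw : AEStronglyMeasurable w μ)
    (hwu : MemLp (fun t ↦ w t - u t) p μ) : MemLp (fun t ↦ F (w t) - F (u t)) p μ :=
  hwu.of_le_mul ((hF.continuous.comp_aestronglyMeasurable hw).sub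
    (hF.continuous.comp_aestronglyMeasurable hu)) (.of_forall fun t ↦ hF.norm_sub_le (w t) (u t))

theorem lpNorm_comp_sub_comp_le_of_lipschitzWith {K : ℝ≥0} {F : V → E} (hF : LipschitzWith K F)
    {u w : α → V} (hwu : MemLp (fun t ↦ w t - u t) p μ) :
    lpNorm (fun t ↦ F (w t) - F (u t)) p μ ≤ K * lpNorm (fun t ↦ w t - u t) p μ := by
  calc lpNorm (fun t ↦ F (w t) - F (u t)) p μ
      ≤ lpNorm ((K : ℝ) • fun t ↦ ‖w t - u t‖) p μ :=
        lpNorm_mono_real (hwu.norm.const_smul _) fun t ↦ hF.norm_sub_le (w t) (u t)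
    _ = K * lpNorm (fun t ↦ w t - u t) p μ := by
        simp [lpNorm_const_smul, lpNorm_norm hwu.1]

theorem norm_integral_smul_le_lpNorm_mul_lpNorm [NormedSpace ℝ E] [p.HolderConjugate q]
    {φ : α → ℝ} {f : α → E} (hφ : MemLp φ p μ) (hf : MemLp f q μ) :
    ‖∫ t, φ t • f t ∂μ‖ ≤ lpNorm φ p μ * lpNorm f q μ := by
  have holder : lpNorm (φ • f) 1 μ ≤ lpNorm φ p μ * lpNorm f q μ := by
    rw [← toReal_eLpNorm (hφ.1.smul hf.1), ← toReal_eLpNorm hφ.1, ← toReal_eLpNorm hf.1,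
      ← ENNReal.toReal_mul]
    exact ENNReal.toReal_mono (ENNReal.mul_ne_top hφ.2.ne hf.2.ne)
      (eLpNorm_smul_le_mul_eLpNorm hf.1 hφ.1)
  rw [lpNorm_one_eq_integral_norm (hφ.1.smul hf.1)] at holder
  exact (norm_integral_le_integral_norm _).trans holder

end Measure

section Interval

variable [NormedSpace ℝ E] {F : ℝ → E} {a b : ℝ} {x x' : ℝ → ℝ}

theorem integral_deriv_smul_comp_eq_zero_of_eq (hF : Continuous F) (hx : ContinuousOn x [[a, b]])
    (hx' : ∀ ξ ∈ Ioo (min a b) (max a b), HasDerivWithinAt x (x' ξ) (Ioi ξ) ξ)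
    (hx'_int : IntervalIntegrable x' volume a b) (hper : x a = x b) :
    ∫ ξ in a..b, x' ξ • F (x ξ) = 0 := by
  have hint : IntervalIntegrable (fun ξ ↦ x' ξ • F (x ξ)) volume a b :=
    hx'_int.smul_continuousOn (hF.comp_continuousOn hx)
  calc ∫ ξ in a..b, x' ξ • F (x ξ)
      = ∫ r in x a..x b, F r :=
        intervalIntegral.integral_deriv_smul_comp''' hx hx' hF.continuousOn
          (hF.continuousOn.integrableOn_compact (isCompact_uIcc.image_of_continuousOn hx))
          ((intervalIntegrable_iff' (by finiteness)).1 hint)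
    _ = 0 := by rw [hper, intervalIntegral.integral_same]

theorem integral_deriv_smul_comp_add_eq_integral_sub {y : ℝ → ℝ} (hF : Continuous F)
    (hx : ContinuousOn x [[a, b]])
    (hx' : ∀ ξ ∈ Ioo (min a b) (max a b), HasDerivWithinAt x (x' ξ) (Ioi ξ) ξ)
    (hx'_int : IntervalIntegrable x' volume a b) (hper : x a = x b)
    (hdiff : IntervalIntegrable (fun ξ ↦ x' ξ • (F (x ξ + y ξ) - F (x ξ))) volume a b) :
    ∫ ξ in a..b, x' ξ • F (x ξ + y ξ) = ∫ ξ in a..b, x' ξ • (F (x ξ + y ξ) - F (x ξ)) := by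
  have hadd := intervalIntegral.integral_add hdiff
    (hx'_int.smul_continuousOn (hF.comp_continuousOn hx))
  simpa only [← smul_add, sub_add_cancel, Function.comp_apply, add_zero,
    integral_deriv_smul_comp_eq_zero_of_eq hF hx hx' hx'_int hper] using hadd

theorem stmt_16_general {p q : ℝ≥0∞} [p.HolderConjugate q] {K : ℝ≥0} (hF : LipschitzWith K F)
    {y : ℝ → ℝ} (hx : ContinuousOn x [[a, b]])
    (hx' : ∀ ξ ∈ Ioo (min a b) (max a b), HasDerivWithinAt x (x' ξ) (Ioi ξ) ξ)
    (hper : x a = x b) (hy : MemLp y p (volume.restrict (Ι a b)))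
    (hx'_mem : MemLp x' q (volume.restrict (Ι a b))) :
    ‖∫ ξ in a..b, x' ξ • F (x ξ + y ξ)‖ ≤
      K * lpNorm y p (volume.restrict (Ι a b)) * lpNorm x' q (volume.restrict (Ι a b)) := by
  have : q.HolderConjugate p := .symm
  have : IsFiniteMeasure (volume.restrict (Ι a b)) := isFiniteMeasure_restrict_Ioc _ _
  have hx'_int : IntervalIntegrable x' volume a b :=
    intervalIntegrable_iff.2 (hx'_mem.integrable (ENNReal.HolderConjugate.one_le q p))
  have hx_meas : AEStronglyMeasurable x (volume.restrict (Ι a b)) :=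
    (hx.mono uIoc_subset_uIcc).aestronglyMeasurable measurableSet_uIoc
  have hxy_sub : MemLp (fun ξ ↦ x ξ + y ξ - x ξ) p (volume.restrict (Ι a b)) := by
    simpa only [add_sub_cancel_left] using hy
  have hdiff : MemLp (fun ξ ↦ F (x ξ + y ξ) - F (x ξ)) p (volume.restrict (Ι a b)) :=
    memLp_comp_sub_comp_of_lipschitzWith hF hx_meas (hx_meas.add hy.1) hxy_sub
  have hdiff_le : lpNorm (fun ξ ↦ F (x ξ + y ξ) - F (x ξ)) p (volume.restrict (Ι a b)) ≤
      K * lpNorm y p (volume.restrict (Ι a b)) := by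
    simpa only [add_sub_cancel_left] using lpNorm_comp_sub_comp_le_of_lipschitzWith hF hxy_sub
  rw [integral_deriv_smul_comp_add_eq_integral_sub hF.continuous hx hx' hx'_int hper
      (intervalIntegrable_iff.2 (memLp_one_iff_integrable.1 (hdiff.smul hx'_mem))),
    intervalIntegral.norm_intervalIntegral_eq, mul_comm]
  exact (norm_integral_smul_le_lpNorm_mul_lpNorm hx'_mem hdiff).trans
    (mul_le_mul_of_nonneg_left hdiff_le lpNorm_nonneg)

end Interval

/-- The estimate `|⟨D_ξ F(x+y), x⟩| ≤ ‖DF‖₀ |y|₂ |D_ξ x|₂` for the Nemytskii operator of a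
scalar `C¹` function `F` with derivative bounded by `M`: for `x` of class `C¹` with
`x(0) = x(2π)` and `y` measurable and square-integrable on `[0,2π]`,
`|∫₀^{2π} F(x(ξ)+y(ξ)) x'(ξ) dξ| ≤ M (∫₀^{2π} y²)^{1/2} (∫₀^{2π} x'²)^{1/2}`. -/
theorem stmt_16 (F : ℝ → ℝ) (hF : ContDiff ℝ 1 F) (M : ℝ)
    (hM : ∀ r : ℝ, |deriv F r| ≤ M)
    (x : ℝ → ℝ) (hx : ContDiff ℝ 1 x) (hper : x 0 = x (2 * Real.pi))
    (y : ℝ → ℝ) (hy_meas : Measurable y)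
    (hy_int : IntervalIntegrable (fun ξ => (y ξ) ^ 2) MeasureTheory.volume 0 (2 * Real.pi)) :
    |∫ ξ in (0 : ℝ)..(2 * Real.pi), F (x ξ + y ξ) * deriv x ξ| ≤
      M * Real.sqrt (∫ ξ in (0 : ℝ)..(2 * Real.pi), (y ξ) ^ 2) *
        Real.sqrt (∫ ξ in (0 : ℝ)..(2 * Real.pi), (deriv x ξ) ^ 2) := by
  lift M to ℝ≥0 using (abs_nonneg _).trans (hM 0)
  have hLip : LipschitzWith M F :=
    lipschitzWith_of_nnnorm_deriv_le (hF.differentiable one_ne_zero) hM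
  have hx'_cont : Continuous (deriv x) := hx.continuous_deriv le_rfl
  have hx'_sq_int : IntervalIntegrable (fun ξ ↦ deriv x ξ ^ 2) volume 0 (2 * π) :=
    (hx'_cont.pow 2).intervalIntegrable _ _
  have hy_mem : MemLp y 2 (volume.restrict (Ι 0 (2 * π))) :=
    (memLp_two_iff_integrable_sq hy_meas.aestronglyMeasurable).2 (intervalIntegrable_iff.1 hy_int)
  have hx'_mem : MemLp (deriv x) 2 (volume.restrict (Ι 0 (2 * π))) :=
    (memLp_two_iff_integrable_sq hx'_cont.aestronglyMeasurable).2
      (intervalIntegrable_iff.1 hx'_sq_int)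
  have key := stmt_16_general hLip hx.continuous.continuousOn
    (fun ξ _ ↦ (hx.differentiable one_ne_zero ξ).hasDerivAt.hasDerivWithinAt) hper hy_mem hx'_mem
  rw [lpNorm_two_eq_sqrt_integral_sq hy_mem.1, lpNorm_two_eq_sqrt_integral_sq hx'_mem.1] at key
  simpa only [uIoc_of_le two_pi_pos.le, ← intervalIntegral.integral_of_le two_pi_pos.le,
    norm_eq_abs, smul_eq_mul, mul_comm (deriv x _)] using key
end
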